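/- arXiv:1706.00392 — 2 statements merged into one kernel-verified Lean document; each statement's English description precedes it below -/
import Mathlib

section
/- For each positive integer ℓ, the number of primes p ≤ x with p > ℓ and φ(p−ℓ) > φ(p+ℓ) is asymptotic to (1/2)π(x) as x → ∞; that is, #{p ≤ x : p prime, p > ℓ, φ(p−ℓ) > φ(p+ℓ)} / π(x) tends to 1/2 as x tends to infinity. -/
open Filter Topology

/-!
Up to `O(ℓ / p)`, the number `log φ(p - ℓ) - log φ(p + ℓ)` is the sum of `∓ log (1 - 1 / q)` over
the primes `q` dividing `p + ℓ`, respectively `p - ℓ`. Fix a finite set `P` of primes and keep only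
`q ∈ P`. By the prime number theorem in arithmetic progressions (via the Wiener–Ikehara theorem and
the analytic input on Dirichlet `L`-functions on `Re s = 1`), the residues of `p` modulo the
`q ∈ P` are asymptotically independent uniform units. The change of variables `u ↦ -u` exchanges
`p + ℓ` and `p - ℓ`, so the truncated sum is symmetrically distributed and is positive with
probability `1 / 2`, up to the probability that it is tiny.

That probability tends to `0` as `P` grows: the reals `log (1 - 1 / q)` are linearly independent
over `ℤ` (look at the `q`-adic valuation for the largest `q` involved), so the atoms of the
distribution have mass at most the product of `1 - 1 / q` over the `q ∈ P` not dividing `2 * ℓ`,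
which tends to `0` because `∑ 1 / q` diverges.
Finally, the discarded primes `q ∉ P` contribute little for most `p`: a Brun–Titchmarsh type bound
for the number of `p ≤ x` in a residue class modulo `q`, uniform in `q ≤ 2 x`, shows that their
average contribution is at most a constant times `∑_{q ∉ P} log q / q ^ 2`.
-/

namespace ShiftedTotient

open MeasureTheory

/-- The Fejér kernel `(sin (u / 2) / (u / 2)) ^ 2`, the Fourier transform of the tent function
`t ↦ 1 - |t|` on `[-1, 1]`. -/
noncomputable def fejerKernel (u : ℝ) : ℝ := Real.sinc (u / 2) ^ 2

lemma fejerKernel_nonneg (u : ℝ) : 0 ≤ fejerKernel u := sq_nonneg _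

@[fun_prop]
lemma continuous_fejerKernel : Continuous fejerKernel :=
  (Real.continuous_sinc.comp (continuous_id.div_const 2)).pow 2

@[fun_prop]
lemma measurable_fejerKernel : Measurable fejerKernel := continuous_fejerKernel.measurable

lemma sq_mul_fejerKernel (u : ℝ) : u ^ 2 * fejerKernel u = 2 * (1 - Real.cos u) := by
  rcases eq_or_ne u 0 with rfl | hu
  · simp
  · have half_angle := Real.cos_two_mul' (u / 2)
    rw [mul_div_cancel₀ _ two_ne_zero] at half_angle
    rw [fejerKernel, Real.sinc_of_ne_zero (by positivity), half_angle]
    field_simp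
    linear_combination Real.sin_sq_add_cos_sq (u / 2)

lemma fejerKernel_le (u : ℝ) : fejerKernel u ≤ 5 * (1 + u ^ 2)⁻¹ := by
  rw [← div_eq_mul_inv, le_div_iff₀ (by positivity)]
  have le_one : fejerKernel u ≤ 1 := (sq_le_one_iff_abs_le_one _).2 (Real.abs_sinc_le_one _)
  linarith [sq_mul_fejerKernel u, Real.neg_one_le_cos u]

lemma integrable_fejerKernel : Integrable fejerKernel := by
  refine (integrable_inv_one_add_sq.const_mul 5).mono' (by fun_prop) ?_
  filter_upwards with u
  rw [Real.norm_of_nonneg (fejerKernel_nonneg u)]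
  exact fejerKernel_le u

lemma integral_fejerKernel_pos : 0 < ∫ u, fejerKernel u :=
  integral_pos_of_integrable_nonneg_nonzero (x := 0) continuous_fejerKernel
    integrable_fejerKernel fejerKernel_nonneg (by simp [fejerKernel])

lemma integral_one_sub_mul_cos {w : ℝ} (hw : w ≠ 0) :
    ∫ t in (0 : ℝ)..1, (1 - t) * Real.cos (w * t) = (1 - Real.cos w) / w ^ 2 := by
  have antideriv (t : ℝ) : HasDerivAt
      (fun t ↦ (1 - t) * (Real.sin (w * t) / w) - Real.cos (w * t) / w ^ 2)
      ((1 - t) * Real.cos (w * t)) t := by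
    have lin : HasDerivAt (fun t ↦ w * t) w t := by simpa using (hasDerivAt_id t).const_mul w
    convert! (((hasDerivAt_id t).const_sub 1).mul (lin.sin.div_const w)).sub
      (lin.cos.div_const (w ^ 2)) using 1
    simp only [id]
    field_simp
    ring
  rw [intervalIntegral.integral_eq_sub_of_hasDerivAt (fun t _ ↦ antideriv t)
    (Continuous.intervalIntegrable (by fun_prop) _ _)]
  simp only [sub_self, mul_one, zero_mul, zero_sub, sub_zero, mul_zero, Real.sin_zero, zero_div,
    Real.cos_zero, one_div, sub_neg_eq_add]
  ring

lemma integral_tent_mul_exp (w : ℝ) :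
    ∫ t in (-1 : ℝ)..1, (1 - |t| : ℂ) * Complex.exp (w * t * Complex.I) = fejerKernel w := by
  have cont : Continuous fun t : ℝ ↦ (1 - |t| : ℂ) * Complex.exp (w * t * Complex.I) := by fun_prop
  have fold : ∫ t in (-1 : ℝ)..1, (1 - |t| : ℂ) * Complex.exp (w * t * Complex.I) =
      ((2 * ∫ t in (0 : ℝ)..1, (1 - t) * Real.cos (w * t) : ℝ) : ℂ) := by
    rw [← intervalIntegral.integral_add_adjacent_intervals (b := 0)
      (cont.intervalIntegrable _ _) (cont.intervalIntegrable _ _), ← neg_zero,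
      ← intervalIntegral.integral_comp_neg, neg_zero, ← intervalIntegral.integral_add
        (Continuous.intervalIntegrable (by fun_prop) _ _) (cont.intervalIntegrable _ _),
      ← intervalIntegral.integral_const_mul, ← intervalIntegral.integral_ofReal]
    refine intervalIntegral.integral_congr fun t ht ↦ ?_
    rw [Set.uIcc_of_le zero_le_one] at ht
    have two_cos := Complex.two_cos (w * t)
    simp only [abs_neg, abs_of_nonneg ht.1]
    push_cast
    rw [mul_neg, ← mul_add, add_comm (Complex.exp _), ← two_cos]
    ring
  rw [fold]
  rcases eq_or_ne w 0 with rfl | hw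
  · have area : ∫ t in (0 : ℝ)..1, (1 - t) = 1 / 2 := by
      rw [intervalIntegral.integral_sub (by simp) (by simp), integral_id]
      norm_num
    simp [fejerKernel, area]
  · rw [integral_one_sub_mul_cos hw, ← mul_div_assoc, ← sq_mul_fejerKernel,
      mul_div_cancel_left₀ _ (by positivity)]

section Laplace

variable {β : ℝ → ℂ} {M : ℝ} {g : ℂ → ℂ}

lemma norm_exp_ofReal_mul_ofReal_mul_I (v t : ℝ) : ‖Complex.exp (v * t * Complex.I)‖ = 1 := by
  rw [← Complex.ofReal_mul, Complex.norm_exp_ofReal_mul_I]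

lemma integrable_damped_mul_tent (hβ : Measurable β) (hM : ∀ u, ‖β u‖ ≤ M) {ε : ℝ} (hε : 0 < ε)
    (v : ℝ) :
    Integrable (Function.uncurry fun u t : ℝ ↦
      β u * Complex.exp (-ε * u) * ((1 - |t| : ℂ) * Complex.exp ((v - u : ℝ) * t * Complex.I)))
      ((volume.restrict (Set.Ioi 0)).prod (volume.restrict (Set.Ioc (-1) 1))) := by
  have tent_integrable : Integrable (fun t : ℝ ↦ (1 - |t| : ℂ))
      (volume.restrict (Set.Ioc (-1) 1)) := by
    refine (intervalIntegrable_iff_integrableOn_Ioc_of_le (by norm_num)).1 ?_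
    exact Continuous.intervalIntegrable (by fun_prop) _ _
  have damped_integrable : Integrable (fun u : ℝ ↦ β u * Complex.exp (-ε * u))
      (volume.restrict (Set.Ioi 0)) :=
    (integrableOn_exp_mul_complex_Ioi (by simpa) 0).bdd_mul hβ.aestronglyMeasurable
      (ae_of_all _ hM)
  refine ((damped_integrable.mul_prod tent_integrable).bdd_mul (c := 1)
    (f := fun z : ℝ × ℝ ↦ Complex.exp ((v - z.1 : ℝ) * z.2 * Complex.I))
    (Continuous.aestronglyMeasurable (by fun_prop))
    (ae_of_all _ fun z ↦ (norm_exp_ofReal_mul_ofReal_mul_I _ _).le)).congr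
      (ae_of_all _ fun z ↦ ?_)
  simp only [Function.uncurry]
  ring

lemma integral_damped_mul_fejerKernel (hβ : Measurable β) (hM : ∀ u, ‖β u‖ ≤ M) {ε : ℝ}
    (hε : 0 < ε) (v : ℝ) :
    ∫ u in Set.Ioi (0 : ℝ), β u * Complex.exp (-ε * u) * fejerKernel (v - u) =
      ∫ t in (-1 : ℝ)..1, (1 - |t| : ℂ) * Complex.exp (v * t * Complex.I) *
        ∫ u in Set.Ioi (0 : ℝ), β u * Complex.exp (-(ε + t * Complex.I) * u) := by
  calc
    _ = ∫ u in Set.Ioi (0 : ℝ), ∫ t in Set.Ioc (-1 : ℝ) 1, β u * Complex.exp (-ε * u) *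
          ((1 - |t| : ℂ) * Complex.exp ((v - u : ℝ) * t * Complex.I)) := by
      simp_rw [integral_const_mul, ← intervalIntegral.integral_of_le
        (show (-1 : ℝ) ≤ 1 by norm_num), integral_tent_mul_exp]
    _ = ∫ t in Set.Ioc (-1 : ℝ) 1, ∫ u in Set.Ioi (0 : ℝ), β u * Complex.exp (-ε * u) *
          ((1 - |t| : ℂ) * Complex.exp ((v - u : ℝ) * t * Complex.I)) :=
      integral_integral_swap (integrable_damped_mul_tent hβ hM hε v)
    _ = _ := by
      rw [intervalIntegral.integral_of_le (by norm_num)]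
      simp_rw [← integral_const_mul]
      refine integral_congr_ae (ae_of_all _ fun t ↦ integral_congr_ae (ae_of_all _ fun u ↦ ?_))
      have phase : Complex.exp (-ε * u) * Complex.exp ((v - u : ℝ) * t * Complex.I) =
          Complex.exp (v * t * Complex.I) * Complex.exp (-(ε + t * Complex.I) * u) := by
        rw [← Complex.exp_add, ← Complex.exp_add]
        congr 1
        push_cast
        ring
      linear_combination β u * (1 - |t| : ℂ) * phase

lemma tendsto_integral_damped_mul_fejerKernel (hβ : Measurable β) (hM : ∀ u, ‖β u‖ ≤ M) (v : ℝ) :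
    Tendsto (fun ε : ℝ ↦ ∫ u in Set.Ioi (0 : ℝ), β u * Complex.exp (-ε * u) * fejerKernel (v - u))
      (𝓝[>] 0) (𝓝 (∫ u in Set.Ioi (0 : ℝ), β u * fejerKernel (v - u))) := by
  refine tendsto_integral_filter_of_dominated_convergence (fun u ↦ M * fejerKernel (v - u))
    (Eventually.of_forall fun ε ↦ Measurable.aestronglyMeasurable (by fun_prop)) ?_
    ((integrable_fejerKernel.comp_sub_left v).const_mul M).integrableOn
    (ae_of_all _ fun u ↦ ?_)
  · filter_upwards [self_mem_nhdsWithin] with ε hε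
    filter_upwards [ae_restrict_mem measurableSet_Ioi] with u hu
    have damping_le : ‖Complex.exp (-ε * u)‖ ≤ 1 := by
      rw [Complex.norm_exp, Real.exp_le_one_iff]
      simpa using (mul_pos hε hu).le
    rw [norm_mul, norm_mul, Complex.norm_of_nonneg (fejerKernel_nonneg _)]
    gcongr
    · exact fejerKernel_nonneg _
    · exact (mul_le_mul (hM u) damping_le (norm_nonneg _)
        ((norm_nonneg _).trans (hM u))).trans_eq (mul_one M)
  · have cont : Continuous fun ε : ℝ ↦ β u * Complex.exp (-ε * u) * fejerKernel (v - u) := by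
      fun_prop
    simpa using (cont.tendsto 0).mono_left nhdsWithin_le_nhds

lemma tendsto_integral_boundary (hg : ContinuousOn g {s | 0 ≤ s.re}) (v : ℝ) :
    Tendsto (fun ε : ℝ ↦ ∫ t in (-1 : ℝ)..1,
        (1 - |t| : ℂ) * Complex.exp (v * t * Complex.I) * g (ε + t * Complex.I)) (𝓝[>] 0)
      (𝓝 (∫ t in (-1 : ℝ)..1,
        (1 - |t| : ℂ) * Complex.exp (v * t * Complex.I) * g (t * Complex.I))) := by
  have cont : Continuous (Function.uncurry fun ε t : ℝ ↦
      (1 - |t| : ℂ) * Complex.exp (v * t * Complex.I) * g (max ε 0 + t * Complex.I)) := by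
    refine Continuous.mul (by fun_prop) (hg.comp_continuous (by fun_prop) fun z ↦ ?_)
    simp
  have lim := ((intervalIntegral.continuous_parametric_intervalIntegral_of_continuous'
    (μ := volume) cont (-1) 1).tendsto 0).mono_left (nhdsWithin_le_nhds (s := Set.Ioi 0))
  simp only [max_self, Complex.ofReal_zero, zero_add] at lim
  refine lim.congr' ?_
  filter_upwards [self_mem_nhdsWithin] with ε hε
  simp only [max_eq_left (le_of_lt (Set.mem_Ioi.1 hε))]

lemma integral_mul_fejerKernel_eq (hβ : Measurable β) (hM : ∀ u, ‖β u‖ ≤ M)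
    (hg : ContinuousOn g {s | 0 ≤ s.re})
    (hgβ : ∀ s : ℂ, 0 < s.re → ∫ u in Set.Ioi (0 : ℝ), β u * Complex.exp (-s * u) = g s) (v : ℝ) :
    ∫ u in Set.Ioi (0 : ℝ), β u * fejerKernel (v - u) =
      ∫ t in (-1 : ℝ)..1, (1 - |t| : ℂ) * Complex.exp (v * t * Complex.I) * g (t * Complex.I) := by
  refine tendsto_nhds_unique (tendsto_integral_damped_mul_fejerKernel hβ hM v)
    ((tendsto_integral_boundary hg v).congr' ?_)
  filter_upwards [self_mem_nhdsWithin] with ε hε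
  rw [integral_damped_mul_fejerKernel hβ hM hε]
  refine intervalIntegral.integral_congr fun t _ ↦ ?_
  rw [hgβ _ (by simpa using hε)]

lemma tendsto_integral_mul_fejerKernel (hβ : Measurable β) (hM : ∀ u, ‖β u‖ ≤ M)
    (hg : ContinuousOn g {s | 0 ≤ s.re})
    (hgβ : ∀ s : ℂ, 0 < s.re → ∫ u in Set.Ioi (0 : ℝ), β u * Complex.exp (-s * u) = g s) :
    Tendsto (fun v ↦ ∫ u in Set.Ioi (0 : ℝ), β u * fejerKernel (v - u)) atTop (𝓝 0) := by
  have to_bot : Tendsto (fun v : ℝ ↦ -(v * (2 * Real.pi)⁻¹)) atTop (cocompact ℝ) :=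
    (tendsto_neg_atTop_atBot.comp (tendsto_id.atTop_mul_const (by positivity))).mono_right
      atBot_le_cocompact
  have riemann_lebesgue := (Real.tendsto_integral_exp_smul_cocompact
    (Set.indicator (Set.Ioc (-1) 1) fun t : ℝ ↦ (1 - |t| : ℂ) * g (t * Complex.I))).comp to_bot
  refine riemann_lebesgue.congr fun v ↦ ?_
  rw [integral_mul_fejerKernel_eq hβ hM hg hgβ, intervalIntegral.integral_of_le (by norm_num),
    ← integral_indicator measurableSet_Ioc]
  refine integral_congr_ae (ae_of_all _ fun t ↦ ?_)
  simp only [Set.indicator_apply, smul_ite, smul_zero]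
  congr 1
  have phase : ((2 * Real.pi * -(t * -(v * (2 * Real.pi)⁻¹)) : ℝ) : ℂ) = v * t := by
    norm_cast
    field_simp
  rw [Circle.smul_def, Real.fourierChar_apply, phase, smul_eq_mul]
  ring

lemma tendsto_integral_rescaled_mul_fejerKernel (hβ : Measurable β) (hM : ∀ u, ‖β u‖ ≤ M)
    (hg : ContinuousOn g {s | 0 ≤ s.re})
    (hgβ : ∀ s : ℂ, 0 < s.re → ∫ u in Set.Ioi (0 : ℝ), β u * Complex.exp (-s * u) = g s)
    {T : ℝ} (hT : 0 < T) :
    Tendsto (fun v ↦ ∫ u in Set.Ioi (0 : ℝ), β (T⁻¹ * u) * fejerKernel (v - u)) atTop (𝓝 0) := by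
  refine tendsto_integral_mul_fejerKernel (g := fun s ↦ T * g (T * s)) (by fun_prop)
    (fun u ↦ hM _) ?_ fun s hs ↦ ?_
  · refine continuousOn_const.mul (hg.comp (by fun_prop) fun s hs ↦ ?_)
    simpa using mul_nonneg hT.le hs
  · have rescale := integral_comp_mul_left_Ioi
      (fun u : ℝ ↦ β u * Complex.exp (-(T * s) * u)) 0 (inv_pos.2 hT)
    rw [inv_inv, mul_zero, hgβ _ (by simpa using mul_pos hT hs), Complex.real_smul] at rescale
    rw [← rescale]
    refine integral_congr_ae (ae_of_all _ fun u ↦ ?_)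
    have hT' : (T : ℂ) ≠ 0 := by exact_mod_cast hT.ne'
    simp only
    congr 2
    push_cast
    field_simp

end Laplace

section Tauberian

variable {β : ℝ → ℝ} {M : ℝ}

lemma le_integral_mul_fejerKernel_of_window (hβ : Measurable β) (hM : ∀ u, |β u| ≤ M) {δ R v : ℝ}
    (hR : 0 ≤ R) (hδ : ∀ u, |v - u| ≤ R → δ ≤ β u) :
    (δ + M) * (∫ w in -R..R, fejerKernel w) - M * (∫ w, fejerKernel w) ≤
      ∫ u, β u * fejerKernel (v - u) := by
  have inner_integrable :=
    (integrable_fejerKernel.indicator (measurableSet_Ioc (a := -R) (b := R))).const_mul (δ + M)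
  have total_integrable := integrable_fejerKernel.const_mul M
  calc
    _ = ∫ w, (δ + M) * (Set.Ioc (-R) R).indicator fejerKernel w - M * fejerKernel w := by
      rw [integral_sub inner_integrable total_integrable, integral_const_mul, integral_const_mul,
        integral_indicator measurableSet_Ioc, intervalIntegral.integral_of_le (by linarith)]
    _ ≤ ∫ w, β (v - w) * fejerKernel w := by
      refine integral_mono (inner_integrable.sub total_integrable)
        (integrable_fejerKernel.bdd_mul (c := M) (Measurable.aestronglyMeasurable (by fun_prop))
          (ae_of_all _ fun w ↦ hM _)) fun w ↦ ?_
      have kernel_nonneg := fejerKernel_nonneg w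
      by_cases hw : w ∈ Set.Ioc (-R) R
      · have := hδ (v - w) (by rw [sub_sub_cancel]; exact abs_le.2 ⟨hw.1.le, hw.2⟩)
        simp only [Set.indicator_of_mem hw]
        nlinarith
      · have := (abs_le.1 (hM (v - w))).1
        simp only [Set.indicator_of_notMem hw]
        nlinarith
    _ = _ := by
      simpa using integral_sub_left_eq_self (fun u ↦ β u * fejerKernel (v - u)) volume v

lemma exists_window_integral_pos (M : ℝ) {δ : ℝ} (hδ : 0 < δ) :
    ∃ R > 0, 0 < (δ + M) * (∫ w in -R..R, fejerKernel w) - M * (∫ w, fejerKernel w) := by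
  have lim := ((intervalIntegral_tendsto_integral integrable_fejerKernel tendsto_neg_atTop_atBot
    tendsto_id).const_mul (δ + M)).sub_const (M * ∫ w, fejerKernel w)
  have lim_pos : 0 < (δ + M) * (∫ w, fejerKernel w) - M * (∫ w, fejerKernel w) := by
    rw [← sub_mul, add_sub_cancel_right]
    exact mul_pos hδ integral_fejerKernel_pos
  obtain ⟨R, hR, hR'⟩ := ((eventually_gt_atTop 0).and (lim.eventually (lt_mem_nhds lim_pos))).exists
  exact ⟨R, hR, hR'⟩

lemma eventually_exists_lt_of_tendsto_fejer_average (hβ : Measurable β) (hM : ∀ u, |β u| ≤ M)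
    (havg : ∀ T : ℝ, 0 < T →
      Tendsto (fun v ↦ ∫ u in Set.Ioi 0, β (T⁻¹ * u) * fejerKernel (v - u)) atTop (𝓝 0))
    {δ η : ℝ} (hδ : 0 < δ) (hη : 0 < η) :
    ∀ᶠ v in atTop, ∃ u, |v - u| ≤ η ∧ β u < δ := by
  obtain ⟨R, hR, window_pos⟩ := exists_window_integral_pos M hδ
  have hT : 0 < R / η := by positivity
  have average_lt := ((havg _ hT).comp (tendsto_id.const_mul_atTop hT)).eventually
    (gt_mem_nhds window_pos)
  filter_upwards [average_lt, eventually_gt_atTop η] with v hv hηv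
  by_contra! hwindow
  refine hv.not_ge ?_
  rw [Function.comp_apply, ← integral_indicator measurableSet_Ioi]
  simp only [Set.indicator_mul_left]
  refine le_integral_mul_fejerKernel_of_window (Measurable.indicator (by fun_prop)
    measurableSet_Ioi) (fun u ↦ ?_) hR.le fun u hu ↦ ?_
  · exact (norm_indicator_le_norm_self (fun u ↦ β ((R / η)⁻¹ * u)) u).trans (hM _)
  · have scaled : |v - (R / η)⁻¹ * u| ≤ η := by
      rw [id_eq, show R / η * v - u = R / η * (v - (R / η)⁻¹ * u) by field_simp, abs_mul,
        abs_of_pos hT, div_mul_eq_mul_div, div_le_iff₀ hη] at hu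
      exact le_of_mul_le_mul_left hu hR
    have u_pos : 0 < u := by
      have : 0 < (R / η)⁻¹ * u := by linarith [(abs_le.1 scaled).2]
      exact pos_of_mul_pos_right this (by positivity)
    rw [Set.indicator_of_mem (Set.mem_Ioi.2 u_pos)]
    exact hwindow _ scaled

lemma tendsto_zero_of_tendsto_fejer_average (hβ : Measurable β) (hM : ∀ u, |β u| ≤ M) {L : ℝ}
    (hslow : ∀ u h, 0 ≤ u → 0 ≤ h → β u - L * h ≤ β (u + h))
    (havg : ∀ T : ℝ, 0 < T →
      Tendsto (fun v ↦ ∫ u in Set.Ioi 0, β (T⁻¹ * u) * fejerKernel (v - u)) atTop (𝓝 0)) :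
    Tendsto β atTop (𝓝 0) := by
  have havg_neg : ∀ T : ℝ, 0 < T →
      Tendsto (fun v ↦ ∫ u in Set.Ioi 0, (-β) (T⁻¹ * u) * fejerKernel (v - u)) atTop (𝓝 0) := by
    intro T hT
    simpa only [Pi.neg_apply, neg_mul, integral_neg, neg_zero] using (havg T hT).neg
  refine Metric.tendsto_nhds.2 fun δ hδ ↦ ?_
  obtain ⟨η, hη, hLη⟩ : ∃ η > 0, L * (2 * η) ≤ δ / 2 := by
    refine ⟨δ / (4 * (|L| + 1)), by positivity, ?_⟩
    calc L * (2 * (δ / (4 * (|L| + 1)))) ≤ (|L| + 1) * (2 * (δ / (4 * (|L| + 1)))) := by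
          gcongr; linarith [le_abs_self L]
      _ = δ / 2 := by field_simp; norm_num
  have slow : ∀ u h, 0 ≤ u → 0 ≤ h → h ≤ 2 * η → β u - δ / 2 ≤ β (u + h) := by
    intro u h hu hh hhη
    have : L * h ≤ δ / 2 := by
      rcases le_total 0 L with hL | hL
      · exact (mul_le_mul_of_nonneg_left hhη hL).trans hLη
      · exact (mul_nonpos_of_nonpos_of_nonneg hL hh).trans (half_pos hδ).le
    linarith [hslow u h hu hh]
  have above := (tendsto_atTop_add_const_right _ η tendsto_id).eventually
    (eventually_exists_lt_of_tendsto_fejer_average hβ hM havg (half_pos hδ) hη)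
  have below := (tendsto_atTop_add_const_right _ (-η) tendsto_id).eventually
    (eventually_exists_lt_of_tendsto_fejer_average hβ.neg (fun u ↦ by simpa using hM u) havg_neg
      (half_pos hδ) hη)
  filter_upwards [above, below, eventually_ge_atTop (2 * η)] with v ⟨u, hu, hβu⟩ ⟨w, hw, hβw⟩ hv
  rw [id_eq, abs_le] at hu hw
  have lower := slow v (u - v) (by linarith) (by linarith) (by linarith)
  have upper := slow w (v - w) (by linarith) (by linarith) (by linarith)
  rw [add_sub_cancel] at lower upper
  rw [Pi.neg_apply] at hβw
  rw [Real.dist_eq, sub_zero, abs_lt]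
  constructor <;> linarith

theorem tendsto_zero_of_laplace_continuousOn (hβ : Measurable β) (hM : ∀ u, |β u| ≤ M) {L : ℝ}
    (hslow : ∀ u h, 0 ≤ u → 0 ≤ h → β u - L * h ≤ β (u + h)) {g : ℂ → ℂ}
    (hg : ContinuousOn g {s | 0 ≤ s.re})
    (hgβ : ∀ s : ℂ, 0 < s.re → ∫ u in Set.Ioi (0 : ℝ), (β u : ℂ) * Complex.exp (-s * u) = g s) :
    Tendsto β atTop (𝓝 0) := by
  refine tendsto_zero_of_tendsto_fejer_average hβ hM hslow fun T hT ↦ ?_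
  have lim := tendsto_integral_rescaled_mul_fejerKernel (β := fun u ↦ (β u : ℂ)) (by fun_prop)
    (fun u ↦ by simpa using hM u) hg hgβ hT
  refine ((Complex.continuous_re.tendsto 0).comp lim).congr fun v ↦ ?_
  simp only [Function.comp_apply, ← Complex.ofReal_mul, integral_complex_ofReal, Complex.ofReal_re]

end Tauberian

section WienerIkehara

variable {f : ℕ → ℝ} {B : ℝ}

/-- The mean value `x⁻¹ * ∑_{k ≤ x} f k` at `x = exp u`; the Tauberian theorem applies to it in the
variable `u`. -/
noncomputable def logMean (f : ℕ → ℝ) (u : ℝ) : ℝ :=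
  Real.exp (-u) * ∑ k ∈ Finset.Icc 1 ⌊Real.exp u⌋₊, f k

lemma monotone_sum_Icc_floor (hf : ∀ n, 0 ≤ f n) :
    Monotone fun x : ℝ ↦ ∑ k ∈ Finset.Icc 1 ⌊x⌋₊, f k := fun _ _ hxy ↦
  Finset.sum_le_sum_of_subset_of_nonneg (Finset.Icc_subset_Icc_right (Nat.floor_mono hxy))
    fun k _ _ ↦ hf k

lemma measurable_logMean (hf : ∀ n, 0 ≤ f n) : Measurable (logMean f) := by
  have := (monotone_sum_Icc_floor hf).measurable
  unfold logMean
  fun_prop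

lemma logMean_nonneg (hf : ∀ n, 0 ≤ f n) (u : ℝ) : 0 ≤ logMean f u :=
  mul_nonneg (Real.exp_pos _).le (Finset.sum_nonneg fun k _ ↦ hf k)

lemma logMean_le (hB₀ : 0 ≤ B) (hB : ∀ n : ℕ, ∑ k ∈ Finset.Icc 1 n, f k ≤ B * n) (u : ℝ) :
    logMean f u ≤ B := calc
  logMean f u ≤ Real.exp (-u) * (B * Real.exp u) := by
    unfold logMean
    gcongr
    exact (hB _).trans (by gcongr; exact Nat.floor_le (Real.exp_pos u).le)
  _ = B := by rw [mul_left_comm, ← Real.exp_add, neg_add_cancel, Real.exp_zero, mul_one]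

lemma exp_neg_mul_logMean_le (hf : ∀ n, 0 ≤ f n) (u : ℝ) {h : ℝ} (hh : 0 ≤ h) :
    Real.exp (-h) * logMean f u ≤ logMean f (u + h) := by
  unfold logMean
  rw [← mul_assoc, ← Real.exp_add, ← neg_add_rev]
  exact mul_le_mul_of_nonneg_left
    (monotone_sum_Icc_floor hf (Real.exp_le_exp.2 (le_add_of_nonneg_right hh))) (Real.exp_pos _).le

lemma logMean_sub_mul_le (hf : ∀ n, 0 ≤ f n) (hB₀ : 0 ≤ B)
    (hB : ∀ n : ℕ, ∑ k ∈ Finset.Icc 1 n, f k ≤ B * n) (u : ℝ) {h : ℝ} (hh : 0 ≤ h) :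
    logMean f u - B * h ≤ logMean f (u + h) := by
  refine le_trans ?_ (exp_neg_mul_logMean_le hf u hh)
  nlinarith [Real.one_sub_le_exp_neg h, logMean_nonneg hf u, logMean_le hB₀ hB u]

lemma integral_Ioi_one_mul_cpow (S : ℝ → ℂ) (s : ℂ) :
    ∫ t in Set.Ioi (1 : ℝ), S t * (t : ℂ) ^ (-(1 + s + 1)) =
      ∫ u in Set.Ioi (0 : ℝ), Complex.exp (-u) * S (Real.exp u) * Complex.exp (-s * u) := by
  have image_exp : Real.exp '' Set.Ioi 0 = Set.Ioi 1 := by simp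
  rw [← image_exp, integral_image_eq_integral_abs_deriv_smul measurableSet_Ioi
    (fun x _ ↦ (Real.hasDerivAt_exp x).hasDerivWithinAt) Real.exp_injective.injOn]
  refine integral_congr_ae (ae_of_all _ fun u ↦ ?_)
  simp only [abs_of_pos (Real.exp_pos u), Complex.real_smul]
  rw [Complex.cpow_def_of_ne_zero (by exact_mod_cast (Real.exp_pos u).ne'),
    ← Complex.ofReal_log (Real.exp_pos u).le, Real.log_exp, Complex.ofReal_exp]
  have exponents : Complex.exp u * Complex.exp (u * -(1 + s + 1)) =
      Complex.exp (-u) * Complex.exp (-s * u) := by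
    rw [← Complex.exp_add, ← Complex.exp_add]
    ring_nf
  linear_combination S (Real.exp u) * exponents

lemma integral_logMean_mul_exp (hf : ∀ n, 0 ≤ f n)
    (hB : ∀ n : ℕ, ∑ k ∈ Finset.Icc 1 n, f k ≤ B * n) {s : ℂ} (hs : 0 < s.re) :
    ∫ u in Set.Ioi (0 : ℝ), (logMean f u : ℂ) * Complex.exp (-s * u) =
      LSeries (fun n ↦ (f n : ℂ)) (1 + s) / (1 + s) := by
  have hs' : 1 + s ≠ 0 := fun h ↦ by
    have := congrArg Complex.re h
    simp only [Complex.add_re, Complex.one_re, Complex.zero_re] at this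
    linarith
  have bounded : (fun n : ℕ ↦ ∑ k ∈ Finset.Icc 1 n, f k) =O[atTop] fun n ↦ (n : ℝ) ^ (1 : ℝ) := by
    refine Asymptotics.IsBigO.of_bound B (Eventually.of_forall fun n ↦ ?_)
    rw [Real.norm_of_nonneg (Finset.sum_nonneg fun k _ ↦ hf k), Real.rpow_one,
      Real.norm_of_nonneg n.cast_nonneg]
    exact hB n
  rw [LSeries_eq_mul_integral_of_nonneg f zero_le_one (by simpa using hs) bounded hf,
    mul_div_cancel_left₀ _ hs', integral_Ioi_one_mul_cpow]
  refine integral_congr_ae (ae_of_all _ fun u ↦ ?_)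
  simp [logMean]

lemma integral_logMean_sub_mul_exp (hf : ∀ n, 0 ≤ f n) (hB₀ : 0 ≤ B)
    (hB : ∀ n : ℕ, ∑ k ∈ Finset.Icc 1 n, f k ≤ B * n) (A : ℝ) {s : ℂ} (hs : 0 < s.re) :
    ∫ u in Set.Ioi (0 : ℝ), ((logMean f u - A : ℝ) : ℂ) * Complex.exp (-s * u) =
      LSeries (fun n ↦ (f n : ℂ)) (1 + s) / (1 + s) - A / s := by
  have exp_integrable : IntegrableOn (fun u : ℝ ↦ Complex.exp (-s * u)) (Set.Ioi 0) :=
    integrableOn_exp_mul_complex_Ioi (by simpa using hs) 0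
  have logMean_integrable :
      IntegrableOn (fun u : ℝ ↦ (logMean f u : ℂ) * Complex.exp (-s * u)) (Set.Ioi 0) := by
    have := measurable_logMean hf
    refine exp_integrable.bdd_mul (c := B) (Measurable.aestronglyMeasurable (by fun_prop))
      (ae_of_all _ fun u ↦ ?_)
    rw [Complex.norm_real, Real.norm_of_nonneg (logMean_nonneg hf u)]
    exact logMean_le hB₀ hB u
  have integral_const : ∫ u in Set.Ioi (0 : ℝ), (A : ℂ) * Complex.exp (-s * u) = A / s := by
    rw [integral_const_mul, integral_exp_mul_complex_Ioi (by simpa using hs)]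
    simp [div_eq_mul_inv]
  rw [← integral_logMean_mul_exp hf hB hs, ← integral_const,
    ← integral_sub logMean_integrable (exp_integrable.const_mul _)]
  simp only [Complex.ofReal_sub, sub_mul]

theorem tendsto_logMean (hf : ∀ n, 0 ≤ f n)
    (hB : ∀ n : ℕ, ∑ k ∈ Finset.Icc 1 n, f k ≤ B * n) {A : ℝ} {G : ℂ → ℂ}
    (hG : ContinuousOn G {s | 1 ≤ s.re})
    (hGf : ∀ s : ℂ, 1 < s.re → G s = LSeries (fun n ↦ (f n : ℂ)) s - A / (s - 1)) :
    Tendsto (logMean f) atTop (𝓝 A) := by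
  have hB₀ : 0 ≤ B := by simpa using (hf 1).trans (by simpa using hB 1)
  have re_one_add : ∀ s : ℂ, 0 ≤ s.re → 1 + s ≠ 0 := fun s hs h ↦ by
    have := congrArg Complex.re h
    simp only [Complex.add_re, Complex.one_re, Complex.zero_re] at this
    linarith
  have lim : Tendsto (fun u ↦ logMean f u - A) atTop (𝓝 0) := by
    refine tendsto_zero_of_laplace_continuousOn (M := B + |A|) (L := B)
      (g := fun s ↦ (G (1 + s) - A) / (1 + s)) ((measurable_logMean hf).sub_const A) (fun u ↦ ?_)
      (fun u h _ hh ↦ ?_) ?_ fun s hs ↦ ?_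
    · refine (abs_sub _ _).trans ?_
      rw [abs_of_nonneg (logMean_nonneg hf u)]
      gcongr
      exact logMean_le hB₀ hB u
    · linarith [logMean_sub_mul_le hf hB₀ hB u hh]
    · refine ContinuousOn.div ((hG.comp (by fun_prop) fun s hs ↦ ?_).sub continuousOn_const)
        (by fun_prop) re_one_add
      simpa using hs
    · rw [integral_logMean_sub_mul_exp hf hB₀ hB A hs, hGf _ (by simpa using hs),
        add_sub_cancel_left]
      have hs₀ : s ≠ 0 := by rintro rfl; simp at hs
      have hs₁ := re_one_add s hs.le
      field_simp
      ring
  simpa using lim.add_const A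

theorem tendsto_sum_Icc_div (hf : ∀ n, 0 ≤ f n)
    (hB : ∀ n : ℕ, ∑ k ∈ Finset.Icc 1 n, f k ≤ B * n) {A : ℝ} {G : ℂ → ℂ}
    (hG : ContinuousOn G {s | 1 ≤ s.re})
    (hGf : ∀ s : ℂ, 1 < s.re → G s = LSeries (fun n ↦ (f n : ℂ)) s - A / (s - 1)) :
    Tendsto (fun n : ℕ ↦ (∑ k ∈ Finset.Icc 1 n, f k) / n) atTop (𝓝 A) := by
  have lim := ((tendsto_logMean hf hB hG hGf).comp Real.tendsto_log_atTop).comp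
    tendsto_natCast_atTop_atTop
  refine lim.congr' ?_
  filter_upwards [eventually_gt_atTop 0] with n hn
  have hn' : (0 : ℝ) < n := by exact_mod_cast hn
  rw [Function.comp_apply, Function.comp_apply, logMean, Real.exp_neg, Real.exp_log hn',
    Nat.floor_natCast, inv_mul_eq_div]

end WienerIkehara

section Proportion

variable {α β : Type*} [Fintype α] [Fintype β]

/-- The probability of `S` for the uniform distribution on a finite type. -/
noncomputable def proportion (S : α → Prop) : ℝ :=
  open scoped Classical in ({a | S a} : Finset α).card / Fintype.card α

lemma proportion_eq_card_div (S : α → Prop) [DecidablePred S] :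
    proportion S = ({a | S a} : Finset α).card / Fintype.card α := by
  unfold proportion
  congr

lemma proportion_mono {S T : α → Prop} (h : ∀ a, S a → T a) : proportion S ≤ proportion T := by
  classical
  rw [proportion_eq_card_div, proportion_eq_card_div]
  gcongr with a
  exact h a

lemma proportion_comp_equiv (e : α ≃ β) (S : β → Prop) :
    proportion (fun a ↦ S (e a)) = proportion S := by
  classical
  rw [proportion_eq_card_div, proportion_eq_card_div, Fintype.card_congr e]
  congr 2
  exact Finset.card_equiv e (by simp)

lemma proportion_le_of_forall_fiber [Nonempty β] {S : α × β → Prop} {κ : ℝ}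
    (h : ∀ b, proportion (fun a ↦ S (a, b)) ≤ κ) : proportion S ≤ κ := by
  classical
  have card_eq : (({x | S x} : Finset (α × β)).card : ℝ) =
      ∑ b, (({a | S (a, b)} : Finset α).card : ℝ) := by
    simp only [Finset.card_filter, Nat.cast_sum, Fintype.sum_prod_type_right]
  have average : proportion S = (∑ b, proportion fun a ↦ S (a, b)) / Fintype.card β := by
    simp only [proportion_eq_card_div, card_eq, Fintype.card_prod, Nat.cast_mul, div_mul_eq_div_div,
      Finset.sum_div]
  rw [average, div_le_iff₀ (by exact_mod_cast Fintype.card_pos), mul_comm, ← nsmul_eq_mul,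
    ← Finset.card_univ]
  exact Finset.sum_le_card_nsmul _ _ _ fun b _ ↦ h b

lemma proportion_le_one_sub {S : α → Prop} {a : α} (ha : ¬ S a) :
    proportion S ≤ 1 - (Fintype.card α : ℝ)⁻¹ := by
  classical
  have card_pos : (0 : ℝ) < Fintype.card α := by exact_mod_cast Fintype.card_pos_iff.2 ⟨a⟩
  have card_lt : ({a | S a} : Finset α).card < Fintype.card α :=
    Finset.card_lt_univ_of_notMem (x := a) (by simpa using ha)
  rw [proportion_eq_card_div, div_le_iff₀ card_pos, sub_mul, inv_mul_cancel₀ card_pos.ne', one_mul,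
    le_sub_iff_add_le]
  exact_mod_cast card_lt

lemma abs_proportion_pos_sub_half_le [Nonempty α] {f : α → ℝ} (e : α ≃ α)
    (he : ∀ a, f (e a) = -f a) {ε : ℝ} (hε : 0 ≤ ε) :
    |proportion (fun a ↦ 0 < f a) - 1 / 2| ≤ proportion fun a ↦ |f a| ≤ ε := by
  classical
  have symmetric : proportion (fun a ↦ f a < 0) = proportion fun a ↦ 0 < f a := by
    rw [← proportion_comp_equiv e]
    simp only [he, Left.neg_neg_iff]
  have total : proportion (fun a ↦ 0 < f a) + proportion (fun a ↦ f a < 0) +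
      proportion (fun a ↦ f a = 0) = 1 := by
    simp only [proportion_eq_card_div, ← add_div]
    rw [div_eq_one_iff_eq (by exact_mod_cast Fintype.card_ne_zero), ← Finset.card_univ (α := α)]
    norm_cast
    rw [Finset.card_filter, Finset.card_filter, Finset.card_filter, ← Finset.sum_add_distrib,
      ← Finset.sum_add_distrib, Finset.card_eq_sum_ones]
    refine Finset.sum_congr rfl fun a _ ↦ ?_
    rcases lt_trichotomy (f a) 0 with h | h | h <;> simp [h, h.not_gt, ne_of_lt, ne_of_gt]
  have zero_le : proportion (fun a ↦ f a = 0) ≤ proportion fun a ↦ |f a| ≤ ε :=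
    proportion_mono fun a ha ↦ by simpa [ha] using hε
  have zero_nonneg : 0 ≤ proportion fun a ↦ f a = 0 := by unfold proportion; positivity
  rw [abs_le]
  constructor <;> linarith

lemma exists_pos_proportion_abs_sub_le (f : α → ℝ) :
    ∃ ε > 0, ∀ t, ∃ s, proportion (fun a ↦ |f a - t| ≤ ε) ≤ proportion fun a ↦ f a = s := by
  have separated : ∀ᶠ ε : ℝ in 𝓝[>] 0, ∀ a b, |f a - f b| ≤ 2 * ε → f a = f b := by
    simp only [eventually_all]
    intro a b
    rcases eq_or_ne (f a) (f b) with h | h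
    · exact Eventually.of_forall fun _ _ ↦ h
    · filter_upwards [Ioo_mem_nhdsGT (half_pos (abs_sub_pos.2 h))] with ε hε hle
      linarith [hε.2]
  obtain ⟨ε, hsep, hε⟩ := (separated.and self_mem_nhdsWithin).exists
  refine ⟨ε, hε, fun t ↦ ?_⟩
  by_cases hne : ∃ b, |f b - t| ≤ ε
  · obtain ⟨b, hb⟩ := hne
    refine ⟨f b, proportion_mono fun a ha ↦ hsep a b ?_⟩
    rw [abs_le] at *
    constructor <;> linarith
  · push Not at hne
    exact ⟨t, proportion_mono fun a ha ↦ absurd ha (hne a).not_ge⟩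

section Pi

variable {ι : Type*} [DecidableEq ι] {α : ι → Type*}

lemma proportion_pi_forall [Fintype ι] [∀ i, Fintype (α i)] (S : ∀ i, α i → Prop) :
    proportion (fun u : ∀ i, α i ↦ ∀ i, S i (u i)) = ∏ i, proportion (S i) := by
  classical
  simp only [proportion_eq_card_div, Finset.prod_div_distrib, Fintype.card_pi, Nat.cast_prod]
  rw [← Nat.cast_prod (R := ℝ) (fun i ↦ ({a | S i a} : Finset (α i)).card),
    ← Fintype.card_piFinset]
  congr 3
  ext u
  simp

lemma sum_piFinsetUnion (f : ∀ i, α i → ℝ) {s t : Finset ι} (hst : Disjoint s t)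
    (u : ∀ i : s, α i) (v : ∀ i : t, α i) :
    ∑ i : ↥(s ∪ t), f i (Equiv.piFinsetUnion α hst (u, v) i) =
      ∑ i : s, f i (u i) + ∑ i : t, f i (v i) := by
  rw [← (Equiv.Finset.union s t hst).sum_comp, Fintype.sum_sum_type]
  congr 1
  · exact Finset.sum_congr rfl fun i _ ↦
      congrArg (f i) (Equiv.piFinsetUnion_left α hst i.2 (Finset.mem_union_left t i.2))
  · exact Finset.sum_congr rfl fun i _ ↦
      congrArg (f i) (Equiv.piFinsetUnion_right α hst i.2 (Finset.mem_union_right s i.2))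

lemma proportion_abs_sum_sub_le_of_subset [∀ i, Fintype (α i)] [∀ i, Nonempty (α i)]
    (f : ∀ i, α i → ℝ) {s t : Finset ι} (hst : s ⊆ t) {ε κ : ℝ}
    (h : ∀ τ, proportion (fun u : ∀ i : s, α i ↦ |∑ i : s, f i (u i) - τ| ≤ ε) ≤ κ) (τ : ℝ) :
    proportion (fun u : ∀ i : t, α i ↦ |∑ i : t, f i (u i) - τ| ≤ ε) ≤ κ := by
  obtain ⟨r, disj, rfl⟩ : ∃ r, Disjoint s r ∧ s ∪ r = t :=
    ⟨t \ s, Finset.disjoint_sdiff, Finset.union_sdiff_of_subset hst⟩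
  rw [← proportion_comp_equiv (Equiv.piFinsetUnion α disj)]
  refine proportion_le_of_forall_fiber fun v ↦ le_of_eq_of_le ?_ (h (τ - ∑ i : r, f i (v i)))
  simp only [sum_piFinsetUnion, sub_sub_eq_add_sub]

end Pi

end Proportion

section PrimesInProgressions

/-- The number of primes `p ≤ x` satisfying `S`. -/
noncomputable def primeCount (S : ℕ → Prop) (x : ℕ) : ℕ :=
  open scoped Classical in ({p ∈ Nat.primesLE x | S p} : Finset ℕ).card

/-- The set of primes satisfying `S` has natural density `d` relative to the set of all primes. -/
def HasPrimeDensity (S : ℕ → Prop) (d : ℝ) : Prop :=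
  Tendsto (fun x : ℕ ↦ (primeCount S x : ℝ) / Nat.primeCounting x) atTop (𝓝 d)

lemma primeCount_eq_card (S : ℕ → Prop) [DecidablePred S] (x : ℕ) :
    primeCount S x = ({p ∈ Nat.primesLE x | S p} : Finset ℕ).card := by
  unfold primeCount
  congr

lemma primeCount_mono {S T : ℕ → Prop} (h : ∀ p, S p → T p) (x : ℕ) :
    primeCount S x ≤ primeCount T x := by
  classical
  simp only [primeCount_eq_card]
  exact Finset.card_le_card (Finset.monotone_filter_right _ fun p _ ↦ h p)

lemma primeCount_or_le (S T : ℕ → Prop) (x : ℕ) :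
    primeCount (fun p ↦ S p ∨ T p) x ≤ primeCount S x + primeCount T x := by
  classical
  simp only [primeCount_eq_card, Finset.filter_or]
  exact Finset.card_union_le _ _

lemma primeCount_true (x : ℕ) : primeCount (fun _ ↦ True) x = Nat.primeCounting x := by
  simp [primeCount_eq_card, Nat.primesLE_card_eq_primeCounting]

lemma tendsto_primeCounting_sub_theta_div :
    Tendsto (fun x : ℕ ↦ ((Nat.primeCounting x : ℝ) * Real.log x - Chebyshev.theta x) / x)
      atTop (𝓝 0) := by
  have isBigO : (fun x : ℝ ↦ ((⌊x⌋₊.primeCounting : ℝ) * Real.log x - Chebyshev.theta x) / x)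
      =O[atTop] fun x ↦ (Real.log x)⁻¹ := by
    refine (Chebyshev.primeCounting_sub_theta_div_log_isBigO.mul
      (Asymptotics.isBigO_refl (fun x : ℝ ↦ Real.log x / x) atTop)).congr' ?_ ?_ <;>
    · filter_upwards [eventually_gt_atTop 1] with x hx
      have := Real.log_pos hx
      have : 0 < x := by linarith
      field_simp
  refine ((isBigO.trans_tendsto Real.tendsto_log_atTop.inv_tendsto_atTop).comp
    tendsto_natCast_atTop_atTop).congr fun n ↦ ?_
  simp

lemma tendsto_psi_sub_theta_div :
    Tendsto (fun x : ℕ ↦ (Chebyshev.psi x - Chebyshev.theta x) / x) atTop (𝓝 0) := by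
  have sqrt_div : Tendsto (fun x : ℝ ↦ √x / x) atTop (𝓝 0) := by
    simpa only [Real.sqrt_div_self, Pi.inv_def] using Real.tendsto_sqrt_atTop.inv_tendsto_atTop
  exact ((Chebyshev.isBigO_psi_sub_theta_sqrt.mul
    (Asymptotics.isBigO_refl (fun x : ℝ ↦ x⁻¹) atTop)).trans_tendsto sqrt_div).comp
      tendsto_natCast_atTop_atTop

open scoped Classical in
lemma sum_indicator_vonMangoldt (S : ℕ → Prop) (x : ℕ) :
    ∑ k ∈ Finset.Icc 1 x, {n | S n}.indicator ArithmeticFunction.vonMangoldt k =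
      ∑ p ∈ Nat.primesLE x with S p, Real.log p +
        ∑ k ∈ Finset.Icc 1 x with ¬ k.Prime,
          {n | S n}.indicator ArithmeticFunction.vonMangoldt k := by
  rw [← Finset.sum_filter_add_sum_filter_not _ Nat.Prime,
    ← Nat.primesLE_eq_filter_Icc_one, Finset.sum_filter S]
  congr 1
  refine Finset.sum_congr rfl fun p hp ↦ ?_
  simp only [Set.indicator_apply, Set.mem_ofPred_eq,
    ArithmeticFunction.vonMangoldt_apply_prime (Nat.prime_of_mem_primesLE hp)]

lemma sum_indicator_vonMangoldt_sub_le (S : ℕ → Prop) (x : ℕ) :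
    ∑ k ∈ Finset.Icc 1 x, {n | S n}.indicator ArithmeticFunction.vonMangoldt k -
      (Chebyshev.psi x - Chebyshev.theta x) ≤ primeCount S x * Real.log x := by
  classical
  have primes_le : ∑ p ∈ Nat.primesLE x with S p, Real.log p ≤ primeCount S x * Real.log x := by
    rw [primeCount_eq_card, ← nsmul_eq_mul]
    refine Finset.sum_le_card_nsmul _ _ _ fun p hp ↦ ?_
    have hp := Nat.mem_primesLE.1 (Finset.mem_filter.1 hp).1
    exact Real.log_le_log (by exact_mod_cast hp.2.pos) (by exact_mod_cast hp.1)
  have prime_powers_le : ∑ k ∈ Finset.Icc 1 x with ¬ k.Prime,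
      {n | S n}.indicator ArithmeticFunction.vonMangoldt k ≤
        Chebyshev.psi x - Chebyshev.theta x := by
    rw [Chebyshev.psi_sub_theta_eq_sum_not_prime, Nat.floor_natCast,
      ← Finset.Icc_add_one_left_eq_Ioc]
    exact Finset.sum_le_sum fun k _ ↦ Set.indicator_le_self'
      (fun _ _ ↦ ArithmeticFunction.vonMangoldt_nonneg) k
  rw [sum_indicator_vonMangoldt]
  linarith

lemma primeCount_mul_log_le (S : ℕ → Prop) (x : ℕ) :
    primeCount S x * Real.log x ≤
      ∑ k ∈ Finset.Icc 1 x, {n | S n}.indicator ArithmeticFunction.vonMangoldt k +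
        (Nat.primeCounting x * Real.log x - Chebyshev.theta x) := by
  classical
  have defect_le : ∑ p ∈ Nat.primesLE x with S p, (Real.log x - Real.log p) ≤
      ∑ p ∈ Nat.primesLE x, (Real.log x - Real.log p) := by
    refine Finset.sum_le_sum_of_subset_of_nonneg (Finset.filter_subset _ _) fun p hp _ ↦ ?_
    have hp := Nat.mem_primesLE.1 hp
    exact sub_nonneg.2 (Real.log_le_log (by exact_mod_cast hp.2.pos) (by exact_mod_cast hp.1))
  simp only [Finset.sum_sub_distrib, Finset.sum_const, nsmul_eq_mul,
    Nat.primesLE_card_eq_primeCounting, ← Chebyshev.theta_eq_sum_primesLE_log,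
    ← primeCount_eq_card] at defect_le
  have nonneg : 0 ≤ ∑ k ∈ Finset.Icc 1 x with ¬ k.Prime,
      {n | S n}.indicator ArithmeticFunction.vonMangoldt k :=
    Finset.sum_nonneg fun k _ ↦
      Set.indicator_nonneg (fun _ _ ↦ ArithmeticFunction.vonMangoldt_nonneg) k
  rw [sum_indicator_vonMangoldt]
  linarith

lemma tendsto_primeCount_mul_log_div {S : ℕ → Prop} {A : ℝ}
    (h : Tendsto (fun x : ℕ ↦
      (∑ k ∈ Finset.Icc 1 x, {n | S n}.indicator ArithmeticFunction.vonMangoldt k) / x)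
      atTop (𝓝 A)) :
    Tendsto (fun x : ℕ ↦ (primeCount S x : ℝ) * Real.log x / x) atTop (𝓝 A) := by
  refine tendsto_of_tendsto_of_tendsto_of_le_of_le
    (by simpa using h.sub tendsto_psi_sub_theta_div)
    (by simpa using h.add tendsto_primeCounting_sub_theta_div) (fun x ↦ ?_) fun x ↦ ?_
  · simp only [← sub_div]
    exact div_le_div_of_nonneg_right (sum_indicator_vonMangoldt_sub_le S x) x.cast_nonneg
  · simp only [← add_div]
    exact div_le_div_of_nonneg_right (primeCount_mul_log_le S x) x.cast_nonneg

variable {Q : ℕ} [NeZero Q] {a : ZMod Q}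

open ArithmeticFunction.vonMangoldt in
lemma tendsto_sum_residueClass_div (ha : IsUnit a) :
    Tendsto (fun x : ℕ ↦ (∑ k ∈ Finset.Icc 1 x, residueClass a k) / x) atTop
      (𝓝 (Q.totient : ℝ)⁻¹) := by
  refine tendsto_sum_Icc_div (B := Real.log 4 + 4) (G := LFunctionResidueClassAux a)
    (fun n ↦ Set.indicator_nonneg (fun _ _ ↦ ArithmeticFunction.vonMangoldt_nonneg) n)
    (fun n ↦ ?_) (continuousOn_LFunctionResidueClassAux a) fun s hs ↦ ?_
  · refine le_trans ?_ (Chebyshev.psi_le_const_mul_self n.cast_nonneg)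
    rw [Chebyshev.psi, Nat.floor_natCast, ← Finset.Icc_add_one_left_eq_Ioc]
    exact Finset.sum_le_sum fun k _ ↦ Set.indicator_le_self'
      (fun _ _ ↦ ArithmeticFunction.vonMangoldt_nonneg) k
  · simpa using eqOn_LFunctionResidueClassAux ha hs

lemma tendsto_primeCounting_mul_log_div :
    Tendsto (fun x : ℕ ↦ (Nat.primeCounting x : ℝ) * Real.log x / x) atTop (𝓝 1) := by
  have h := tendsto_primeCount_mul_log_div (tendsto_sum_residueClass_div (Q := 1) isUnit_one)
  simpa [Subsingleton.elim _ (1 : ZMod 1), primeCount_true] using h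

lemma hasPrimeDensity_residueClass (ha : IsUnit a) :
    HasPrimeDensity (fun p ↦ (p : ZMod Q) = a) (Q.totient : ℝ)⁻¹ := by
  have lim := (tendsto_primeCount_mul_log_div (tendsto_sum_residueClass_div ha)).div
    tendsto_primeCounting_mul_log_div one_ne_zero
  rw [div_one] at lim
  refine lim.congr' ?_
  filter_upwards [eventually_gt_atTop 1] with x hx
  have log_pos : 0 < Real.log x := Real.log_pos (by exact_mod_cast hx)
  have x_pos : (0 : ℝ) < x := by positivity
  rw [Pi.div_apply, div_div_div_cancel_right₀ x_pos.ne', mul_div_mul_right _ _ log_pos.ne']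

lemma tendsto_primeCounting_cast_atTop :
    Tendsto (fun x : ℕ ↦ (Nat.primeCounting x : ℝ)) atTop atTop :=
  tendsto_natCast_atTop_atTop.comp Nat.tendsto_primeCounting

lemma HasPrimeDensity.of_le_of_le_add {S : ℕ → Prop} {d C : ℝ} {f : ℕ → ℝ}
    (hf : Tendsto (fun x ↦ f x / Nat.primeCounting x) atTop (𝓝 d))
    (lower : ∀ x, f x ≤ primeCount S x) (upper : ∀ x, primeCount S x ≤ f x + C) :
    HasPrimeDensity S d := by
  have vanish : Tendsto (fun x : ℕ ↦ C / Nat.primeCounting x) atTop (𝓝 0) :=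
    tendsto_const_nhds.div_atTop tendsto_primeCounting_cast_atTop
  refine tendsto_of_tendsto_of_tendsto_of_le_of_le hf (by simpa using hf.add vanish)
    (fun x ↦ ?_) fun x ↦ ?_
  · exact div_le_div_of_nonneg_right (lower x) (Nat.cast_nonneg _)
  · simp only [← add_div]
    exact div_le_div_of_nonneg_right (upper x) (Nat.cast_nonneg _)

open scoped Classical in
theorem hasPrimeDensity_proportion_units (S : ZMod Q → Prop) :
    HasPrimeDensity (fun p ↦ S p) (proportion fun u : (ZMod Q)ˣ ↦ S u) := by
  set U := Finset.univ.filter fun u : (ZMod Q)ˣ ↦ S u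
  have classes_disjoint (x : ℕ) : (U : Set (ZMod Q)ˣ).PairwiseDisjoint
      fun u ↦ (Nat.primesLE x).filter fun p : ℕ ↦ (p : ZMod Q) = u := fun u _ v _ huv ↦
    Finset.disjoint_filter.2 fun p _ hu hv ↦ huv (Units.ext (hu.symm.trans hv))
  have card_classes (x : ℕ) :
      (U.biUnion fun u ↦ (Nat.primesLE x).filter fun p : ℕ ↦ (p : ZMod Q) = u).card =
        ∑ u ∈ U, primeCount (fun p ↦ (p : ZMod Q) = u) x := by
    rw [Finset.card_biUnion (classes_disjoint x)]
    exact Finset.sum_congr rfl fun u _ ↦ (primeCount_eq_card _ x).symm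
  refine HasPrimeDensity.of_le_of_le_add (C := (Q + 1 : ℕ))
    (f := fun x ↦ ∑ u ∈ U, (primeCount (fun p ↦ (p : ZMod Q) = u) x : ℝ)) ?_
    (fun x ↦ ?_) fun x ↦ ?_
  · simp only [Finset.sum_div, proportion_eq_card_div, ZMod.card_units_eq_totient,
      div_eq_mul_inv (_ : ℝ) (Q.totient : ℝ), ← nsmul_eq_mul, ← Finset.sum_const]
    exact tendsto_finsetSum _ fun u _ ↦ hasPrimeDensity_residueClass u.isUnit
  · norm_cast
    rw [← card_classes, primeCount_eq_card]
    refine Finset.card_le_card (Finset.biUnion_subset.2 fun u hu ↦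
      Finset.monotone_filter_right _ fun p _ hp ↦ ?_)
    simpa only [hp] using (Finset.mem_filter.1 hu).2
  · norm_cast
    rw [← card_classes, primeCount_eq_card, ← Finset.card_range (Q + 1)]
    refine (Finset.card_le_card fun p hp ↦ ?_).trans (Finset.card_union_le _ _)
    obtain ⟨hpx, hS⟩ := Finset.mem_filter.1 hp
    rw [Finset.mem_union]
    by_cases hu : IsUnit (p : ZMod Q)
    · obtain ⟨u, hu⟩ := hu
      exact Or.inl (Finset.mem_biUnion.2
        ⟨u, Finset.mem_filter.2 ⟨Finset.mem_univ _, hu ▸ hS⟩, Finset.mem_filter.2 ⟨hpx, hu.symm⟩⟩)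
    · rw [ZMod.isUnit_iff_coprime,
        ← (Nat.prime_of_mem_primesLE hpx).dvd_iff_not_coprime] at hu
      exact Or.inr (Finset.mem_range_succ_iff.2 (Nat.le_of_dvd (NeZero.pos Q) hu))

end PrimesInProgressions

section TotientWeight

instance fact_prime_coe (q : Nat.Primes) : Fact (q : ℕ).Prime := ⟨q.2⟩

/-- The contribution `-log (1 - 1 / q)` of a prime factor `q` of `n` to `log (n / φ n)`. -/
noncomputable def totientWeight (q : ℕ) : ℝ := -Real.log (1 - (q : ℝ)⁻¹)

lemma padicNorm_ratio_zpow_of_lt {q r : Nat.Primes} (hrq : (r : ℕ) < q) (c : ℤ) :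
    ‖((r - 1) / r : ℚ_[q]) ^ c‖ = 1 := by
  have norm_eq_one {n : ℕ} (hn : n ≠ 0) (hnq : n < q) : ‖(n : ℚ_[q])‖ = 1 :=
    Padic.norm_natCast_eq_one_iff.2 (Nat.coprime_of_lt_prime hn hnq q.2)
  have sub_one : (r - 1 : ℚ_[q]) = (r - 1 : ℕ) := by push_cast [r.2.one_le]; rfl
  have := r.2.two_le
  rw [norm_zpow, norm_div, sub_one, norm_eq_one (by omega) ((Nat.sub_le _ _).trans_lt hrq),
    norm_eq_one r.2.ne_zero hrq, div_one, one_zpow]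

lemma padicNorm_ratio_zpow_self (q : Nat.Primes) (c : ℤ) :
    ‖((q - 1) / q : ℚ_[q]) ^ c‖ = (q : ℝ) ^ c := by
  have sub_one : (q - 1 : ℚ_[q]) = (q - 1 : ℕ) := by push_cast [q.2.one_le]; rfl
  have := q.2.two_le
  have norm_sub_one : ‖(q - 1 : ℚ_[q])‖ = 1 := by
    rw [sub_one]
    exact Padic.norm_natCast_eq_one_iff.2 (Nat.coprime_of_lt_prime (by omega) (by omega) q.2)
  rw [norm_zpow, norm_div, norm_sub_one, Padic.norm_p, one_div, inv_inv]

lemma exp_neg_sum_mul_totientWeight (P : Finset Nat.Primes) (c : Nat.Primes → ℤ) :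
    Real.exp (-∑ r ∈ P, c r * totientWeight r) =
      ((∏ r ∈ P, ((r - 1) / r : ℚ) ^ c r : ℚ) : ℝ) := by
  rw [← Finset.sum_neg_distrib, Real.exp_sum]
  push_cast
  refine Finset.prod_congr rfl fun r _ ↦ ?_
  have one_lt : (1 : ℝ) < r := by exact_mod_cast r.2.one_lt
  have ratio_pos : 0 < ((r : ℝ) - 1) / r := div_pos (by linarith) (by linarith)
  have ratio_eq : 1 - (r : ℝ)⁻¹ = (r - 1) / r := by field_simp
  rw [totientWeight, ratio_eq, mul_neg, neg_neg, mul_comm, Real.exp_mul, Real.exp_log ratio_pos,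
    Real.rpow_intCast]

theorem eq_zero_of_sum_mul_totientWeight_eq_zero {P : Finset Nat.Primes} {c : Nat.Primes → ℤ}
    (h : ∑ r ∈ P, c r * totientWeight r = 0) : ∀ r ∈ P, c r = 0 := by
  by_contra! hne
  obtain ⟨q, hq, q_max⟩ := ({r ∈ P | c r ≠ 0} : Finset Nat.Primes).exists_max_image
    (fun r ↦ (r : ℕ)) (by simpa [Finset.Nonempty] using hne)
  obtain ⟨hqP, hcq⟩ := Finset.mem_filter.1 hq
  have prod_eq_one : ∏ r ∈ P, ((r - 1) / r : ℚ) ^ c r = 1 := by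
    have := exp_neg_sum_mul_totientWeight P c
    rw [h, neg_zero, Real.exp_zero] at this
    exact_mod_cast this.symm
  have norm_eq_one : ∏ r ∈ P, ‖((r - 1) / r : ℚ_[q]) ^ c r‖ = 1 := by
    have := congrArg (fun x : ℚ ↦ ‖(x : ℚ_[q])‖) prod_eq_one
    push_cast at this
    rwa [norm_prod, norm_one] at this
  rw [Finset.prod_eq_single_of_mem q hqP fun r hr hrq ↦ ?_,
    padicNorm_ratio_zpow_self] at norm_eq_one
  · have one_lt : (1 : ℝ) < q := by exact_mod_cast q.2.one_lt
    exact hcq ((zpow_eq_one_iff_right₀ (by positivity) one_lt.ne').1 norm_eq_one)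
  · by_cases hc : c r = 0
    · simp [hc]
    · exact padicNorm_ratio_zpow_of_lt
        (lt_of_le_of_ne (q_max r (Finset.mem_filter.2 ⟨hr, hc⟩)) (Subtype.coe_ne_coe.2 hrq)) _

end TotientWeight

section TruncatedDifference

lemma hasPrimeDensity_proportion_pi_units (P : Finset Nat.Primes)
    (S : (∀ q : P, ZMod (q : Nat.Primes)) → Prop) :
    HasPrimeDensity (fun p ↦ S fun _ ↦ p)
      (proportion fun u : ∀ q : P, (ZMod (q : Nat.Primes))ˣ ↦ S fun q ↦ u q) := by
  have coprime : Pairwise (Nat.Coprime.onFun fun q : P ↦ ((q : Nat.Primes) : ℕ)) :=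
    fun q r hqr ↦ (Nat.coprime_primes q.1.2 r.1.2).2 fun h ↦ hqr (Subtype.ext (Subtype.ext h))
  have : NeZero (∏ q : P, ((q : Nat.Primes) : ℕ)) :=
    ⟨Finset.prod_ne_zero_iff.2 fun q _ ↦ q.1.2.ne_zero⟩
  let chinese := ZMod.prodEquivPi (fun q : P ↦ ((q : Nat.Primes) : ℕ)) coprime
  have density := hasPrimeDensity_proportion_units fun a ↦ S (chinese a)
  simp only [map_natCast] at density
  rwa [← proportion_comp_equiv
    ((Units.mapEquiv chinese.toMulEquiv).trans MulEquiv.piUnits).toEquiv]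

/-- The coefficient of `totientWeight q` in `log (φ (n - ℓ) / (n - ℓ)) - log (φ (n + ℓ) / (n + ℓ))`,
as a function of the residue class `a` of `n` modulo `q`. -/
def shiftSign (ℓ : ℕ) {q : ℕ} (a : ZMod q) : ℤ :=
  (if a + ℓ = 0 then 1 else 0) - if a - ℓ = 0 then 1 else 0

lemma shiftSign_neg (ℓ : ℕ) {q : ℕ} (a : ZMod q) : shiftSign ℓ (-a) = -shiftSign ℓ a := by
  have add_iff : -a + ℓ = 0 ↔ a - ℓ = 0 := by rw [← neg_eq_zero, neg_add, neg_neg, ← sub_eq_add_neg]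
  have sub_iff : -a - ℓ = 0 ↔ a + ℓ = 0 := by rw [← neg_eq_zero, neg_sub, sub_neg_eq_add, add_comm]
  simp only [shiftSign, add_iff, sub_iff, neg_sub]

/-- The part of `log (φ (n - ℓ) / (n - ℓ)) - log (φ (n + ℓ) / (n + ℓ))` due to the primes in `P`. -/
noncomputable def truncatedDiff (ℓ : ℕ) (P : Finset Nat.Primes) (n : ℕ) : ℝ :=
  ∑ q ∈ P, shiftSign ℓ (n : ZMod q) * totientWeight q

/-- The random analogue of `truncatedDiff ℓ P`, in which the residues modulo the primes in `P` are
independent uniformly distributed units. -/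
noncomputable def unitDiff (ℓ : ℕ) (P : Finset Nat.Primes)
    (u : ∀ q : P, (ZMod (q : Nat.Primes))ˣ) : ℝ :=
  ∑ q : P, shiftSign ℓ (u q : ZMod (q : Nat.Primes)) * totientWeight q

lemma hasPrimeDensity_truncatedDiff (ℓ : ℕ) (P : Finset Nat.Primes) (S : ℝ → Prop) :
    HasPrimeDensity (fun p ↦ S (truncatedDiff ℓ P p)) (proportion fun u ↦ S (unitDiff ℓ P u)) := by
  have coe_sort (n : ℕ) : truncatedDiff ℓ P n =
      ∑ q : P, shiftSign ℓ (n : ZMod (q : Nat.Primes)) * totientWeight q :=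
    (Finset.sum_coe_sort P fun q ↦ shiftSign ℓ (n : ZMod q) * totientWeight q).symm
  simp only [coe_sort]
  exact hasPrimeDensity_proportion_pi_units P fun a ↦
    S (∑ q : P, shiftSign ℓ (a q) * totientWeight q)

lemma unitDiff_neg (ℓ : ℕ) (P : Finset Nat.Primes) (u : ∀ q : P, (ZMod (q : Nat.Primes))ˣ) :
    unitDiff ℓ P (-u) = -unitDiff ℓ P u := by
  simp only [unitDiff, Pi.neg_apply, Units.val_neg, shiftSign_neg, Int.cast_neg, neg_mul,
    Finset.sum_neg_distrib]

lemma exists_shiftSign_ne {ℓ : ℕ} {q : Nat.Primes} (hq : ¬ (q : ℕ) ∣ 2 * ℓ) (c : ℤ) :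
    ∃ u : (ZMod q)ˣ, shiftSign ℓ (u : ZMod q) ≠ c := by
  have two_mul_ne_zero : (ℓ + ℓ : ZMod q) ≠ 0 := by
    rw [← two_mul]
    exact_mod_cast (ZMod.natCast_eq_zero_iff _ _).not.2 hq
  have ne_zero : (ℓ : ZMod q) ≠ 0 := fun h ↦ two_mul_ne_zero (by rw [h, add_zero])
  have sign_eq : shiftSign ℓ (Units.mk0 _ ne_zero : ZMod q) = -1 := by
    simp [shiftSign, two_mul_ne_zero]
  by_cases hc : c = -1
  · exact ⟨-Units.mk0 _ ne_zero, by rw [Units.val_neg, shiftSign_neg, sign_eq, hc]; decide⟩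
  · exact ⟨Units.mk0 _ ne_zero, sign_eq ▸ Ne.symm hc⟩

lemma proportion_shiftSign_eq_le {ℓ : ℕ} {q : Nat.Primes} (hq : ¬ (q : ℕ) ∣ 2 * ℓ) (c : ℤ) :
    proportion (fun u : (ZMod q)ˣ ↦ shiftSign ℓ (u : ZMod q) = c) ≤ Real.exp (-(1 / q : ℝ)) := by
  obtain ⟨u, hu⟩ := exists_shiftSign_ne hq c
  have one_lt : (1 : ℝ) < q := by exact_mod_cast q.2.one_lt
  calc proportion (fun u : (ZMod q)ˣ ↦ shiftSign ℓ (u : ZMod q) = c)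
      ≤ 1 - ((q - 1 : ℕ) : ℝ)⁻¹ := ZMod.card_units q ▸ proportion_le_one_sub hu
    _ ≤ 1 - 1 / q := by
        rw [Nat.cast_pred q.2.pos, one_div]
        gcongr
        linarith
    _ ≤ Real.exp (-(1 / q : ℝ)) := Real.one_sub_le_exp_neg _

lemma proportion_unitDiff_eq_le {ℓ : ℕ} {P : Finset Nat.Primes}
    (hP : ∀ q ∈ P, ¬ (q : ℕ) ∣ 2 * ℓ) (t : ℝ) :
    proportion (fun u ↦ unitDiff ℓ P u = t) ≤ Real.exp (-∑ q ∈ P, (1 / q : ℝ)) := by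
  classical
  by_cases hne : ∃ u, unitDiff ℓ P u = t
  swap
  · rw [proportion_eq_card_div, Finset.filter_false_of_mem fun u _ hu ↦ hne ⟨u, hu⟩]
    simpa using Real.exp_nonneg _
  obtain ⟨u₀, rfl⟩ := hne
  have coefficients_eq (u) (hu : unitDiff ℓ P u = unitDiff ℓ P u₀) (q : P) :
      shiftSign ℓ (u q : ZMod (q : Nat.Primes)) = shiftSign ℓ (u₀ q : ZMod (q : Nat.Primes)) := by
    have := eq_zero_of_sum_mul_totientWeight_eq_zero (P := P) (c := fun r ↦ if hr : r ∈ P then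
      shiftSign ℓ (u ⟨r, hr⟩ : ZMod r) - shiftSign ℓ (u₀ ⟨r, hr⟩ : ZMod r) else 0) ?_ q q.2
    · simpa [sub_eq_zero] using this
    · rw [← Finset.sum_coe_sort]
      simpa [sub_mul, sub_eq_zero, unitDiff] using hu
  calc proportion (fun u ↦ unitDiff ℓ P u = unitDiff ℓ P u₀)
      ≤ ∏ q : P, proportion fun a : (ZMod (q : Nat.Primes))ˣ ↦
          shiftSign ℓ (a : ZMod (q : Nat.Primes)) = shiftSign ℓ (u₀ q : ZMod (q : Nat.Primes)) := by
        rw [← proportion_pi_forall]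
        exact proportion_mono coefficients_eq
    _ ≤ ∏ q : P, Real.exp (-(1 / (q : Nat.Primes) : ℝ)) :=
        Finset.prod_le_prod (fun q _ ↦ by unfold proportion; positivity)
          fun q _ ↦ proportion_shiftSign_eq_le (hP q q.2) _
    _ = Real.exp (-∑ q ∈ P, (1 / q : ℝ)) := by
        rw [← Real.exp_sum, Finset.sum_neg_distrib, Finset.sum_coe_sort P fun q ↦ (1 / q : ℝ)]

lemma exists_sum_one_div_gt {S : Nat.Primes → Prop} (hS : {q | ¬ S q}.Finite) (B : ℝ) :
    ∃ P : Finset Nat.Primes, (∀ q ∈ P, S q) ∧ B < ∑ q ∈ P, (1 / q : ℝ) := by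
  by_contra! h
  classical
  have summable : Summable ({q | S q}.indicator fun q : Nat.Primes ↦ (1 / q : ℝ)) := by
    refine summable_of_sum_le (c := B)
      (Set.indicator_nonneg fun q _ ↦ by positivity) fun P ↦ ?_
    rw [Finset.sum_indicator_eq_sum_filter]
    exact h _ fun q hq ↦ (Finset.mem_filter.1 hq).2
  refine Nat.Primes.not_summable_one_div
    ((summable_congr_cofinite (Set.Finite.subset hS fun q hq hSq ↦ hq ?_)).1 summable)
  exact Set.indicator_of_mem (show q ∈ {q | S q} from hSq) _

lemma finite_primes_dvd {n : ℕ} (hn : n ≠ 0) : {q : Nat.Primes | (q : ℕ) ∣ n}.Finite :=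
  Set.Finite.of_finite_image (f := fun q : Nat.Primes ↦ (q : ℕ))
    (n.divisors.finite_toSet.subset (by rintro _ ⟨q, hq, rfl⟩; simpa [hn] using hq))
    Subtype.val_injective.injOn

lemma exists_eventually_proportion_abs_unitDiff_le {ℓ : ℕ} (hℓ : 0 < ℓ) {δ : ℝ} (hδ : 0 < δ) :
    ∃ ε > 0, ∀ᶠ P in atTop, proportion (fun u ↦ |unitDiff ℓ P u| ≤ ε) ≤ δ := by
  obtain ⟨P₀, hP₀, sum_gt⟩ := exists_sum_one_div_gt (S := fun q ↦ ¬ (q : ℕ) ∣ 2 * ℓ)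
    (by simpa using finite_primes_dvd (n := 2 * ℓ) (by omega)) (-Real.log δ)
  obtain ⟨ε, hε, concentration⟩ := exists_pos_proportion_abs_sub_le (unitDiff ℓ P₀)
  have small (τ : ℝ) : proportion (fun u ↦ |unitDiff ℓ P₀ u - τ| ≤ ε) ≤ δ := by
    obtain ⟨s, hs⟩ := concentration τ
    calc proportion (fun u ↦ |unitDiff ℓ P₀ u - τ| ≤ ε)
        ≤ Real.exp (-∑ q ∈ P₀, (1 / q : ℝ)) := hs.trans (proportion_unitDiff_eq_le hP₀ s)
      _ ≤ Real.exp (Real.log δ) := Real.exp_le_exp.2 (by linarith)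
      _ = δ := Real.exp_log hδ
  refine ⟨ε, hε, (eventually_ge_atTop P₀).mono fun P hP ↦ ?_⟩
  simpa only [sub_zero, unitDiff] using proportion_abs_sum_sub_le_of_subset
    (fun (q : Nat.Primes) (u : (ZMod q)ˣ) ↦ shiftSign ℓ (u : ZMod q) * totientWeight q) hP small 0

lemma abs_proportion_unitDiff_pos_sub_half_le (ℓ : ℕ) (P : Finset Nat.Primes) {ε : ℝ}
    (hε : 0 ≤ ε) :
    |proportion (fun u ↦ 0 < unitDiff ℓ P u) - 1 / 2| ≤
      proportion fun u ↦ |unitDiff ℓ P u| ≤ ε :=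
  abs_proportion_pos_sub_half_le (Equiv.neg _) (unitDiff_neg ℓ P) hε

end TruncatedDifference

section BrunTitchmarsh

open scoped Nat

lemma dvd_prod_range_mul_add {q M K : ℕ} (hqM : q.Coprime M) (hM : M ∣ K !) (a : ℕ) :
    M ∣ ∏ n ∈ Finset.range K, (q * n + a) := by
  obtain ⟨m, -, hm⟩ := Nat.exists_mul_mod_eq_of_coprime a hqM
    (ne_zero_of_dvd_ne_zero K.factorial_ne_zero hM)
  have shift : ∏ n ∈ Finset.range K, (q * (m + n)) ≡ ∏ n ∈ Finset.range K, (q * n + a) [MOD M] :=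
    Nat.ModEq.prod fun n _ ↦ by
      rw [mul_add, add_comm]
      exact Nat.ModEq.add_left _ hm
  rw [← shift.dvd_iff dvd_rfl, Finset.prod_mul_distrib, ← Nat.ascFactorial_eq_prod_range]
  exact dvd_mul_of_dvd_right (hM.trans (Nat.factorial_dvd_ascFactorial m K)) _

lemma prod_range_mul_add_le {q a : ℕ} (ha : a ≤ q) (K : ℕ) :
    ∏ n ∈ Finset.range K, (q * n + a) ≤ q ^ K * K ! := by
  calc ∏ n ∈ Finset.range K, (q * n + a)
      ≤ ∏ n ∈ Finset.range K, (q * (n + 1)) :=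
        Finset.prod_le_prod' fun n _ ↦ by rw [mul_add_one]; gcongr
    _ = q ^ K * K ! := by
        rw [Finset.prod_mul_distrib, Finset.prod_const, Finset.card_range,
          Finset.prod_range_add_one_eq_factorial]

variable {q : ℕ} [Fact q.Prime]

lemma exists_factorial_eq_pow_mul (K : ℕ) :
    ∃ v M, v ≤ K ∧ q.Coprime M ∧ K ! = q ^ v * M := by
  have hq : q.Prime := Fact.out
  obtain ⟨v, M, hqM, hM⟩ :=
    Nat.exists_eq_pow_mul_and_not_dvd K.factorial_ne_zero q hq.ne_one
  refine ⟨v, M, ?_, hq.coprime_iff_not_dvd.2 hqM, hM⟩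
  have dvd : q ^ v ∣ K ! := hM ▸ dvd_mul_right _ _
  calc v ≤ padicValNat q K ! := (padicValNat_dvd_iff_le K.factorial_ne_zero).1 dvd
    _ ≤ (q - 1) * padicValNat q K ! :=
        Nat.le_mul_of_pos_left _ (Nat.sub_pos_of_lt hq.one_lt)
    _ ≤ K := sub_one_mul_padicValNat_factorial (p := q) K ▸ Nat.sub_le _ _

variable {b : ZMod q}

-- `∏ n < K, (q n + b)` is divisible by both the primes in question and the `q`-free part of `K!`,
-- while it is at most `q ^ K * K!`.
lemma prod_primes_residue_le {K : ℕ} {s : Finset ℕ} (hb : b ≠ 0)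
    (prime : ∀ p ∈ s, p.Prime) (lower : ∀ p ∈ s, K < p) (upper : ∀ p ∈ s, p / q < K)
    (residue : ∀ p ∈ s, (p : ZMod q) = b) : ∏ p ∈ s, p ≤ q ^ (2 * K) := by
  have hq : q.Prime := Fact.out
  obtain ⟨v, M, hv, hqM, hM⟩ := exists_factorial_eq_pow_mul (q := q) K
  have M_dvd : M ∣ K ! := hM ▸ dvd_mul_left _ _
  have M_pos : 0 < M := Nat.pos_of_dvd_of_pos M_dvd K.factorial_pos
  have primes_dvd : ∏ p ∈ s, p ∣ ∏ n ∈ Finset.range K, (q * n + b.val) := by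
    refine Finset.prod_primes_dvd _ (fun p hp ↦ (prime p hp).prime) fun p hp ↦ ?_
    have p_eq : q * (p / q) + b.val = p := by
      rw [← residue p hp, ZMod.val_natCast, Nat.div_add_mod]
    have := Finset.dvd_prod_of_mem (fun n ↦ q * n + b.val) (Finset.mem_range.2 (upper p hp))
    rwa [p_eq] at this
  have coprime : (∏ p ∈ s, p).Coprime M := Nat.Coprime.prod_left fun p hp ↦
    (prime p hp).coprime_iff_not_dvd.2 fun h ↦
      (lower p hp).not_ge ((prime p hp).dvd_factorial.1 (h.trans M_dvd))
  have prod_pos : 0 < ∏ n ∈ Finset.range K, (q * n + b.val) :=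
    Finset.prod_pos fun n _ ↦ Nat.add_pos_right _ (ZMod.val_pos.2 hb)
  refine Nat.le_of_mul_le_mul_right ?_ M_pos
  calc (∏ p ∈ s, p) * M
      ≤ ∏ n ∈ Finset.range K, (q * n + b.val) := Nat.le_of_dvd prod_pos
        (coprime.mul_dvd_of_dvd_of_dvd primes_dvd (dvd_prod_range_mul_add hqM M_dvd _))
    _ ≤ q ^ K * K ! := prod_range_mul_add_le (ZMod.val_lt b).le K
    _ = q ^ (K + v) * M := by rw [hM, pow_add, mul_assoc]
    _ ≤ q ^ (2 * K) * M := by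
        gcongr
        · exact hq.one_le
        · omega

lemma primeCount_residue_le_div_add_one (x : ℕ) :
    primeCount (fun p ↦ (p : ZMod q) = b) x ≤ x / q + 1 := by
  rw [primeCount_eq_card, ← Finset.card_range (x / q + 1)]
  refine Finset.card_le_card_of_injOn (· / q) (fun p hp ↦ ?_) fun p hp r hr h ↦ ?_
  · exact Finset.mem_coe.2 (Finset.mem_range_succ_iff.2
      (Nat.div_le_div_right (Nat.mem_primesLE.1 (Finset.mem_filter.1 hp).1).1))
  · have residue_eq : p % q = r % q := (ZMod.natCast_eq_natCast_iff' p r q).1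
      ((Finset.mem_filter.1 hp).2.trans (Finset.mem_filter.1 hr).2.symm)
    rw [← Nat.div_add_mod p q, ← Nat.div_add_mod r q, residue_eq, show p / q = r / q from h]

lemma primeCount_residue_mul_log_le (hb : b ≠ 0) (x : ℕ) :
    primeCount (fun p ↦ (p : ZMod q) = b) x * Real.log (x / q + 1 : ℕ) ≤
      Nat.primeCounting (x / q + 1) * Real.log (x / q + 1 : ℕ) +
        2 * (x / q + 1 : ℕ) * Real.log q := by
  set K := x / q + 1
  set large : Finset ℕ := {p ∈ Nat.primesLE x | (p : ZMod q) = b ∧ K < p} with large_def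
  have hlarge {p : ℕ} (hp : p ∈ large) : (p ≤ x ∧ p.Prime) ∧ (p : ZMod q) = b ∧ K < p := by
    rwa [large_def, Finset.mem_filter, Nat.mem_primesLE] at hp
  have count_le : primeCount (fun p ↦ (p : ZMod q) = b) x ≤ Nat.primeCounting K + large.card := by
    rw [primeCount_eq_card, ← Nat.primesLE_card_eq_primeCounting]
    refine (Finset.card_le_card fun p hp ↦ ?_).trans (Finset.card_union_le _ _)
    obtain ⟨hpx, residue⟩ := Finset.mem_filter.1 hp
    rcases le_or_gt p K with hpK | hpK
    · exact Finset.mem_union_left _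
        (Nat.mem_primesLE.2 ⟨hpK, Nat.prime_of_mem_primesLE hpx⟩)
    · exact Finset.mem_union_right _ (Finset.mem_filter.2 ⟨hpx, residue, hpK⟩)
  have pow_le : K ^ large.card ≤ q ^ (2 * K) :=
    (Finset.pow_card_le_prod large id K fun p hp ↦ (hlarge hp).2.2.le).trans
      (prod_primes_residue_le hb (fun p hp ↦ (hlarge hp).1.2) (fun p hp ↦ (hlarge hp).2.2)
        (fun p hp ↦ Nat.lt_succ_of_le (Nat.div_le_div_right (hlarge hp).1.1))
        fun p hp ↦ (hlarge hp).2.1)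
  have large_le : (large.card : ℝ) * Real.log K ≤ 2 * K * Real.log q := by
    have K_pos : (0 : ℝ) < K := by positivity
    have := Real.log_le_log (pow_pos K_pos _) (by exact_mod_cast pow_le : (K : ℝ) ^ _ ≤ q ^ _)
    simpa only [Real.log_pow, Nat.cast_mul, Nat.cast_ofNat] using this
  calc (primeCount (fun p ↦ (p : ZMod q) = b) x : ℝ) * Real.log K
      ≤ (Nat.primeCounting K + large.card) * Real.log K := by
        gcongr
        exact_mod_cast count_le
    _ ≤ Nat.primeCounting K * Real.log K + 2 * K * Real.log q := by
        rw [add_mul]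
        gcongr

lemma div_add_one_le_two_mul_div {q x : ℕ} (hq : 0 < q) (hqx : q ≤ x) :
    ((x / q + 1 : ℕ) : ℝ) ≤ 2 * (x / q) := by
  have one_le : (1 : ℝ) ≤ x / q := by
    rw [one_le_div (by exact_mod_cast hq)]
    exact_mod_cast hqx
  have div_le : ((x / q : ℕ) : ℝ) ≤ x / q := Nat.cast_div_le
  push_cast
  linarith

lemma primeCount_residue_mul_log_le_of_lt_sq {x : ℕ} (hqx : q ≤ 2 * x) (hx : x < q ^ 2) :
    primeCount (fun p ↦ (p : ZMod q) = b) x * Real.log x ≤ 6 * (x / q * Real.log q) := by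
  have hq : q.Prime := Fact.out
  have q_pos : (0 : ℝ) < q := by exact_mod_cast hq.pos
  have x_pos : 0 < x := by have := hq.pos; omega
  have count_le : (primeCount (fun p ↦ (p : ZMod q) = b) x : ℝ) ≤ 3 * (x / q) := by
    have one_le : (1 : ℝ) ≤ 2 * (x / q) := by
      rw [← mul_div_assoc, one_le_div q_pos]
      exact_mod_cast hqx
    have : ((x / q : ℕ) : ℝ) ≤ x / q := Nat.cast_div_le
    have : (primeCount (fun p ↦ (p : ZMod q) = b) x : ℝ) ≤ (x / q : ℕ) + 1 := by
      exact_mod_cast primeCount_residue_le_div_add_one x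
    linarith
  have log_le : Real.log x ≤ 2 * Real.log q := by
    rw [← Nat.cast_ofNat, ← Real.log_pow]
    exact Real.log_le_log (by exact_mod_cast x_pos) (by exact_mod_cast hx.le)
  calc primeCount (fun p ↦ (p : ZMod q) = b) x * Real.log x
      ≤ 3 * (x / q) * (2 * Real.log q) := by gcongr
    _ = 6 * (x / q * Real.log q) := by ring

lemma primeCount_residue_mul_log_le_of_sq_le (hb : b ≠ 0) {x : ℕ} (hx : q ^ 2 ≤ x)
    (hK : Nat.primeCounting (x / q + 1) * Real.log (x / q + 1 : ℕ) ≤ 2 * (x / q + 1 : ℕ)) :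
    primeCount (fun p ↦ (p : ZMod q) = b) x * Real.log x ≤ 24 * (x / q * Real.log q) := by
  have hq : q.Prime := Fact.out
  have log_q_ge : 1 / 2 ≤ Real.log q := by
    have := Real.log_le_log two_pos (by exact_mod_cast hq.two_le : (2 : ℝ) ≤ q)
    linarith [Real.log_two_gt_d9]
  have q_le_div : q ≤ x / q := (Nat.le_div_iff_mul_le hq.pos).2 (by rwa [← sq])
  have K_le := div_add_one_le_two_mul_div hq.pos (q_le_div.trans (Nat.div_le_self x q))
  have count_le := primeCount_residue_mul_log_le hb x
  have x_lt : x < q * (x / q + 1) := Nat.lt_mul_div_succ x hq.pos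
  set K := x / q + 1
  have x_le : x ≤ K ^ 2 := calc
    x ≤ q * K := x_lt.le
    _ ≤ K ^ 2 := sq K ▸ Nat.mul_le_mul_right K (q_le_div.trans (Nat.le_succ _))
  have log_le : Real.log x ≤ 2 * Real.log K := by
    rw [← Nat.cast_ofNat, ← Real.log_pow]
    exact Real.log_le_log (by exact_mod_cast (pow_pos hq.pos 2).trans_le hx)
      (by exact_mod_cast x_le)
  calc primeCount (fun p ↦ (p : ZMod q) = b) x * Real.log x
      ≤ primeCount (fun p ↦ (p : ZMod q) = b) x * (2 * Real.log K) := by gcongr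
    _ ≤ 2 * (2 * K + 2 * K * Real.log q) := by linarith
    _ ≤ 2 * (2 * K * (2 * Real.log q) + 2 * K * Real.log q) := by
        have := le_mul_of_one_le_right (a := 2 * (K : ℝ)) (by positivity)
          (by linarith : 1 ≤ 2 * Real.log q)
        linarith
    _ ≤ 2 * (2 * (2 * (x / q)) * (2 * Real.log q) + 2 * (2 * (x / q)) * Real.log q) := by gcongr
    _ = 24 * (x / q * Real.log q) := by ring

theorem eventually_primeCount_residue_le :
    ∀ᶠ x : ℕ in atTop, ∀ q ≤ 2 * x, q.Prime → ∀ b : ZMod q, b ≠ 0 →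
      primeCount (fun p ↦ (p : ZMod q) = b) x ≤ 48 * (Real.log q / q) * Nat.primeCounting x := by
  obtain ⟨K₀, hK₀⟩ := eventually_atTop.1 <|
    tendsto_primeCounting_mul_log_div.eventually_le_const one_lt_two
  filter_upwards [eventually_ge_atTop (K₀ ^ 2), eventually_gt_atTop 1,
    tendsto_primeCounting_mul_log_div.eventually_const_le one_half_lt_one]
    with x hxK hx hpi q hqx hq b hb
  have : Fact q.Prime := ⟨hq⟩
  have x_pos : (0 : ℝ) < x := by positivity
  have log_x_pos : 0 < Real.log x := Real.log_pos (by exact_mod_cast hx)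
  have count_mul_log_le :
      primeCount (fun p ↦ (p : ZMod q) = b) x * Real.log x ≤ 24 * (x / q * Real.log q) := by
    rcases lt_or_ge x (q ^ 2) with h | h
    · refine (primeCount_residue_mul_log_le_of_lt_sq hqx h).trans ?_
      gcongr
      norm_num
    · refine primeCount_residue_mul_log_le_of_sq_le hb h ?_
      have K₀_le : K₀ ≤ x / q + 1 := by
        by_contra! hlt
        have := Nat.lt_mul_div_succ x hq.pos
        have : q < K₀ := lt_of_le_of_lt ((Nat.le_div_iff_mul_le hq.pos).2 (by rwa [← sq]))
          (Nat.lt_of_succ_lt hlt)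
        nlinarith
      exact (div_le_iff₀ (by positivity)).1 (hK₀ _ K₀_le)
  rw [le_div_iff₀ x_pos] at hpi
  refine le_of_mul_le_mul_right ?_ log_x_pos
  calc primeCount (fun p ↦ (p : ZMod q) = b) x * Real.log x
      ≤ 48 * (Real.log q / q) * (1 / 2 * x) := count_mul_log_le.trans_eq (by ring)
    _ ≤ 48 * (Real.log q / q) * (Nat.primeCounting x * Real.log x) := by gcongr
    _ = _ := by ring

end BrunTitchmarsh

section TailWeight

lemma totientWeight_nonneg (q : Nat.Primes) : 0 ≤ totientWeight q := by
  have inv_le_one : (q : ℝ)⁻¹ ≤ 1 := Nat.cast_inv_le_one q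
  have inv_nonneg : 0 ≤ (q : ℝ)⁻¹ := by positivity
  exact neg_nonneg.2 (Real.log_nonpos (by linarith) (by linarith))

lemma totientWeight_le (q : Nat.Primes) : totientWeight q ≤ 2 / q := by
  have two_le : (2 : ℝ) ≤ q := by exact_mod_cast q.2.two_le
  have ratio_eq : 1 - (q : ℝ)⁻¹ = (q - 1) / q := by field_simp
  have log_ge := Real.one_sub_inv_le_log_of_pos (div_pos (by linarith) (by linarith) :
    0 < ((q : ℝ) - 1) / q)
  calc totientWeight q ≤ (((q : ℝ) - 1) / q)⁻¹ - 1 := by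
        rw [totientWeight, ratio_eq]
        linarith
    _ = 1 / (q - 1) := by
        have : (q : ℝ) - 1 ≠ 0 := by linarith
        field_simp
        ring
    _ ≤ 2 / q := by
        rw [div_le_div_iff₀ (by linarith) (by linarith)]
        linarith

/-- The finset `Nat.primeFactors n` with values in `Nat.Primes`, the index type of the weights. -/
def primeDivisors (n : ℕ) : Finset Nat.Primes := n.primeFactors.subtype Nat.Prime

lemma mem_primeDivisors {n : ℕ} {q : Nat.Primes} : q ∈ primeDivisors n ↔ (q : ℕ) ∣ n ∧ n ≠ 0 :=
  Finset.mem_subtype.trans (Nat.mem_primeFactors.trans (and_iff_right q.2))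

/-- The contribution to `log (n / φ n)` of the prime factors of `n` outside `P`. -/
noncomputable def tailWeight (P : Finset Nat.Primes) (n : ℕ) : ℝ :=
  ∑ q ∈ primeDivisors n \ P, totientWeight q

lemma tailWeight_nonneg (P : Finset Nat.Primes) (n : ℕ) : 0 ≤ tailWeight P n :=
  Finset.sum_nonneg fun q _ ↦ totientWeight_nonneg q

lemma tailWeight_le {P : Finset Nat.Primes} {n N : ℕ} (hn : n ≤ N) :
    tailWeight P n ≤ ∑ q ∈ (Nat.primesLE N).subtype Nat.Prime \ P,
      if (q : ℕ) ∣ n then totientWeight q else 0 := by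
  rw [← Finset.sum_filter]
  refine Finset.sum_le_sum_of_subset_of_nonneg (fun q hq ↦ ?_) fun q _ _ ↦ totientWeight_nonneg q
  obtain ⟨hqn, hqP⟩ := Finset.mem_sdiff.1 hq
  obtain ⟨dvd, ne_zero⟩ := mem_primeDivisors.1 hqn
  have q_le := (Nat.le_of_dvd (Nat.pos_of_ne_zero ne_zero) dvd).trans hn
  exact Finset.mem_filter.2 ⟨Finset.mem_sdiff.2
    ⟨Finset.mem_subtype.2 (Nat.mem_primesLE.2 ⟨q_le, q.2⟩), hqP⟩, dvd⟩

lemma summable_log_div_sq : Summable fun n : ℕ ↦ Real.log n / (n : ℝ) ^ 2 := by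
  have dominating : Summable fun n : ℕ ↦ 2 * (n : ℝ) ^ (-(3 / 2) : ℝ) :=
    (Real.summable_nat_rpow.2 (by norm_num)).mul_left 2
  refine dominating.of_nonneg_of_le
    (fun n ↦ div_nonneg (Real.log_natCast_nonneg n) (by positivity)) fun n ↦ ?_
  rcases n.eq_zero_or_pos with rfl | hn
  · simp
  have n_pos : (0 : ℝ) < n := by exact_mod_cast hn
  calc Real.log n / (n : ℝ) ^ 2 ≤ (n : ℝ) ^ (1 / 2 : ℝ) / (1 / 2) / (n : ℝ) ^ 2 := by
        gcongr
        exact Real.log_le_rpow_div n_pos.le one_half_pos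
    _ = 2 * ((n : ℝ) ^ (1 / 2 : ℝ) / (n : ℝ) ^ (2 : ℝ)) := by
        rw [Real.rpow_two]
        ring
    _ = 2 * (n : ℝ) ^ (-(3 / 2) : ℝ) := by
        rw [← Real.rpow_sub n_pos]
        norm_num

lemma eventually_sum_sdiff_log_div_sq_le {δ : ℝ} (hδ : 0 < δ) :
    ∀ᶠ P : Finset Nat.Primes in atTop, ∀ t : Finset Nat.Primes,
      ∑ q ∈ t \ P, Real.log q / (q : ℝ) ^ 2 ≤ δ := by
  obtain ⟨P₀, hP₀⟩ := summable_iff_vanishing_norm.1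
    (summable_log_div_sq.comp_injective Subtype.val_injective :
      Summable fun q : Nat.Primes ↦ Real.log q / (q : ℝ) ^ 2) δ hδ
  refine (eventually_ge_atTop P₀).mono fun P hP t ↦ ?_
  exact (Real.le_norm_self _).trans
    (hP₀ _ (Finset.disjoint_of_subset_right hP Finset.sdiff_disjoint)).le

lemma sum_primesLE_tailWeight_le {P : Finset Nat.Primes} {f : ℕ → ℕ} {x N : ℕ}
    (hf : ∀ p ≤ x, f p ≤ N) :
    ∑ p ∈ Nat.primesLE x, tailWeight P (f p) ≤
      ∑ q ∈ (Nat.primesLE N).subtype Nat.Prime \ P,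
        totientWeight q * primeCount (fun p ↦ (q : ℕ) ∣ f p) x := by
  calc ∑ p ∈ Nat.primesLE x, tailWeight P (f p)
      ≤ ∑ p ∈ Nat.primesLE x, ∑ q ∈ (Nat.primesLE N).subtype Nat.Prime \ P,
          if (q : ℕ) ∣ f p then totientWeight q else 0 :=
        Finset.sum_le_sum fun p hp ↦ tailWeight_le (hf p (Nat.mem_primesLE.1 hp).1)
    _ = _ := by
        rw [Finset.sum_comm]
        refine Finset.sum_congr rfl fun q _ ↦ ?_
        rw [← Finset.sum_filter, Finset.sum_const, ← primeCount_eq_card, nsmul_eq_mul, mul_comm]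

lemma primeCount_le_mul_le_sum {f : ℕ → ℝ} (hf : ∀ n, 0 ≤ f n) (ε : ℝ) (x : ℕ) :
    primeCount (fun p ↦ ε ≤ f p) x * ε ≤ ∑ p ∈ Nat.primesLE x, f p := by
  classical
  calc primeCount (fun p ↦ ε ≤ f p) x * ε ≤ ∑ p ∈ Nat.primesLE x with ε ≤ f p, f p := by
        rw [primeCount_eq_card, ← nsmul_eq_mul]
        exact Finset.card_nsmul_le_sum _ _ _ fun p hp ↦ (Finset.mem_filter.1 hp).2
    _ ≤ ∑ p ∈ Nat.primesLE x, f p :=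
        Finset.sum_le_sum_of_subset_of_nonneg (Finset.filter_subset _ _) fun p _ _ ↦ hf p

variable {a : ℤ}

lemma eventually_sum_tailWeight_natAbs_add_le (ha : a ≠ 0) {δ : ℝ} (hδ : 0 < δ) :
    ∀ᶠ P in atTop, ∀ᶠ x : ℕ in atTop,
      ∑ p ∈ Nat.primesLE x, tailWeight P (p + a).natAbs ≤ δ * Nat.primeCounting x := by
  have divisors_finite := finite_primes_dvd (Int.natAbs_ne_zero.2 ha)
  filter_upwards [eventually_ge_atTop divisors_finite.toFinset,
    eventually_sum_sdiff_log_div_sq_le (div_pos hδ (by norm_num : (0 : ℝ) < 96))] with P hP sum_le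
  filter_upwards [eventually_primeCount_residue_le, eventually_ge_atTop a.natAbs] with x hx hax
  have term_le (q : Nat.Primes) (hq : q ∈ (Nat.primesLE (2 * x)).subtype Nat.Prime \ P) :
      totientWeight q * primeCount (fun p ↦ (q : ℕ) ∣ (p + a).natAbs) x ≤
        96 * Nat.primeCounting x * (Real.log q / (q : ℝ) ^ 2) := by
    obtain ⟨hq2x, hqP⟩ := Finset.mem_sdiff.1 hq
    have residue_ne_zero : ((-a : ℤ) : ZMod q) ≠ 0 := fun h ↦ by
      rw [ZMod.intCast_zmod_eq_zero_iff_dvd, dvd_neg, Int.natCast_dvd] at h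
      exact hqP (hP (divisors_finite.mem_toFinset.2 h))
    have dvd_iff (p : ℕ) : (q : ℕ) ∣ (p + a).natAbs ↔ (p : ZMod q) = (-a : ℤ) := by
      rw [← Int.natCast_dvd, ← ZMod.intCast_zmod_eq_zero_iff_dvd, Int.cast_add, Int.cast_natCast,
        Int.cast_neg, eq_neg_iff_add_eq_zero]
    have count_le := hx q (Nat.mem_primesLE.1 (Finset.mem_subtype.1 hq2x)).1 q.2 _ residue_ne_zero
    simp only [dvd_iff]
    calc totientWeight q * primeCount (fun p ↦ (p : ZMod q) = (-a : ℤ)) x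
        ≤ 2 / q * (48 * (Real.log q / q) * Nat.primeCounting x) := by
          gcongr
          exact totientWeight_le q
      _ = 96 * Nat.primeCounting x * (Real.log q / (q : ℝ) ^ 2) := by ring
  calc ∑ p ∈ Nat.primesLE x, tailWeight P (p + a).natAbs
      ≤ ∑ q ∈ (Nat.primesLE (2 * x)).subtype Nat.Prime \ P,
          totientWeight q * primeCount (fun p ↦ (q : ℕ) ∣ (p + a).natAbs) x :=
        sum_primesLE_tailWeight_le fun p hp ↦ by omega
    _ ≤ 96 * Nat.primeCounting x *
          ∑ q ∈ (Nat.primesLE (2 * x)).subtype Nat.Prime \ P, Real.log q / (q : ℝ) ^ 2 := by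
        rw [Finset.mul_sum]
        exact Finset.sum_le_sum term_le
    _ ≤ 96 * Nat.primeCounting x * (δ / 96) := by
        gcongr
        exact sum_le _
    _ = δ * Nat.primeCounting x := by ring

lemma eventually_primeCount_le_tailWeight_le (ha : a ≠ 0) {ε δ : ℝ} (hε : 0 < ε) (hδ : 0 < δ) :
    ∀ᶠ P in atTop, ∀ᶠ x : ℕ in atTop,
      primeCount (fun p ↦ ε ≤ tailWeight P (p + a).natAbs) x ≤ δ * Nat.primeCounting x := by
  filter_upwards [eventually_sum_tailWeight_natAbs_add_le ha (mul_pos hδ hε)] with P hP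
  filter_upwards [hP] with x hx
  refine le_of_mul_le_mul_right ?_ hε
  calc primeCount (fun p ↦ ε ≤ tailWeight P (p + a).natAbs) x * ε
      ≤ ∑ p ∈ Nat.primesLE x, tailWeight P (p + a).natAbs :=
        primeCount_le_mul_le_sum (fun p ↦ tailWeight_nonneg P (p + a).natAbs) ε x
    _ ≤ δ * ε * Nat.primeCounting x := hx
    _ = δ * Nat.primeCounting x * ε := by ring

end TailWeight

section Comparison

lemma HasPrimeDensity.eventually_le {S : ℕ → Prop} {d c : ℝ} (h : HasPrimeDensity S d)
    (hc : d < c) : ∀ᶠ x : ℕ in atTop, primeCount S x ≤ c * Nat.primeCounting x := by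
  filter_upwards [h.eventually_le_const hc, tendsto_primeCounting_cast_atTop.eventually_gt_atTop 0]
    with x hx hpi using (div_le_iff₀ hpi).1 hx

lemma hasPrimeDensity_zero_of_eventually_not {S : ℕ → Prop} (h : ∀ᶠ p in atTop, ¬ S p) :
    HasPrimeDensity S 0 := by
  classical
  obtain ⟨N, hN⟩ := eventually_atTop.1 h
  refine HasPrimeDensity.of_le_of_le_add (f := 0) (C := N) (by simp)
    (fun x ↦ by simp) fun x ↦ ?_
  rw [Pi.zero_apply, zero_add, Nat.cast_le, primeCount_eq_card, ← Finset.card_range N]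
  refine Finset.card_le_card fun p hp ↦ Finset.mem_range.2 (lt_of_not_ge fun hNp ↦ ?_)
  exact hN p hNp (Finset.mem_filter.1 hp).2

lemma abs_primeCount_sub_primeCount_le (S T : ℕ → Prop) (x : ℕ) :
    |(primeCount S x - primeCount T x : ℝ)| ≤ primeCount (fun p ↦ ¬ (S p ↔ T p)) x := by
  have le_add {S T : ℕ → Prop} :
      (primeCount S x : ℝ) ≤ primeCount T x + primeCount (fun p ↦ ¬ (S p ↔ T p)) x := by
    exact_mod_cast (primeCount_mono (fun p hp ↦ by tauto) x).trans (primeCount_or_le _ _ x)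
  have symm : primeCount (fun p ↦ ¬ (T p ↔ S p)) x = primeCount (fun p ↦ ¬ (S p ↔ T p)) x := by
    simp only [iff_comm]
  have le := le_add (S := S) (T := T)
  have ge := le_add (S := T) (T := S)
  rw [symm] at ge
  rw [abs_le]
  constructor <;> linarith

theorem HasPrimeDensity.of_approx {S : ℕ → Prop} {d : ℝ}
    (h : ∀ δ > 0, ∃ T e, HasPrimeDensity T e ∧ |e - d| ≤ δ ∧
      ∀ᶠ x : ℕ in atTop, primeCount (fun p ↦ ¬ (S p ↔ T p)) x ≤ δ * Nat.primeCounting x) :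
    HasPrimeDensity S d := by
  rw [HasPrimeDensity, Metric.tendsto_nhds]
  intro η hη
  obtain ⟨T, e, density, he, hST⟩ := h (η / 3) (by positivity)
  filter_upwards [hST, Metric.tendsto_nhds.1 density (η / 3) (by positivity),
    tendsto_primeCounting_cast_atTop.eventually_gt_atTop 0] with x hx hT hpi
  have hS : dist (primeCount S x / Nat.primeCounting x : ℝ)
      (primeCount T x / Nat.primeCounting x) ≤ η / 3 := by
    rw [Real.dist_eq, ← sub_div, abs_div, abs_of_pos hpi, div_le_iff₀ hpi]
    exact (abs_primeCount_sub_primeCount_le S T x).trans hx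
  calc dist (primeCount S x / Nat.primeCounting x : ℝ) d
      ≤ _ + _ + _ := dist_triangle4 _ (primeCount T x / Nat.primeCounting x : ℝ) e d
    _ < η / 3 + η / 3 + η / 3 := by
        rw [Real.dist_eq e]
        linarith
    _ = η := by ring

lemma log_totient {n : ℕ} (hn : n ≠ 0) (P : Finset Nat.Primes) :
    Real.log n.totient =
      Real.log n - (∑ q ∈ P, if (q : ℕ) ∣ n then totientWeight q else 0) - tailWeight P n := by
  have euler_product : (n.totient : ℝ) = n * ∏ p ∈ n.primeFactors, (1 - (p : ℝ)⁻¹) := by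
    have := congrArg (Rat.cast (K := ℝ)) n.totient_eq_mul_prod_factors
    push_cast at this
    exact this
  have factor_ne_zero (p : ℕ) (hp : p ∈ n.primeFactors) : 1 - (p : ℝ)⁻¹ ≠ 0 :=
    (sub_pos.2 (inv_lt_one_of_one_lt₀
      (by exact_mod_cast (Nat.prime_of_mem_primeFactors hp).one_lt))).ne'
  have sum_coe : ∑ p ∈ n.primeFactors, totientWeight p = ∑ q ∈ primeDivisors n, totientWeight q :=
    (Finset.sum_subtype_of_mem totientWeight fun p ↦ Nat.prime_of_mem_primeFactors).symm
  have log_eq : Real.log n.totient = Real.log n - ∑ q ∈ primeDivisors n, totientWeight q := by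
    rw [euler_product, Real.log_mul (by exact_mod_cast hn)
      (Finset.prod_ne_zero_iff.2 factor_ne_zero), Real.log_prod factor_ne_zero, ← sum_coe]
    simp only [totientWeight, Finset.sum_neg_distrib, sub_neg_eq_add]
  have primeDivisors_inter : primeDivisors n ∩ P = P.filter fun q : Nat.Primes ↦ (q : ℕ) ∣ n := by
    ext q
    rw [Finset.mem_inter, Finset.mem_filter, mem_primeDivisors, and_iff_left hn, and_comm]
  rw [log_eq, tailWeight, ← Finset.sum_filter, ← primeDivisors_inter, sub_sub,
    Finset.sum_inter_add_sum_sdiff]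

lemma truncatedDiff_eq {ℓ n : ℕ} (hn : ℓ ≤ n) (P : Finset Nat.Primes) :
    truncatedDiff ℓ P n = (∑ q ∈ P, if (q : ℕ) ∣ n + ℓ then totientWeight q else 0) -
      ∑ q ∈ P, if (q : ℕ) ∣ n - ℓ then totientWeight q else 0 := by
  rw [truncatedDiff, ← Finset.sum_sub_distrib]
  refine Finset.sum_congr rfl fun q _ ↦ ?_
  simp only [shiftSign, ← Nat.cast_add, ← Nat.cast_sub hn, ZMod.natCast_eq_zero_iff]
  split_ifs <;> simp

lemma totient_lt_totient_iff {ℓ p : ℕ} (hp : ℓ < p) (P : Finset Nat.Primes) :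
    (p + ℓ).totient < (p - ℓ).totient ↔
      0 < truncatedDiff ℓ P p + (Real.log (p - ℓ : ℕ) - Real.log (p + ℓ : ℕ)) +
        (tailWeight P (p + ℓ) - tailWeight P (p - ℓ)) := by
  have totient_add_pos : 0 < ((p + ℓ).totient : ℝ) := by exact_mod_cast Nat.totient_pos.2 (by omega)
  have totient_sub_pos : 0 < ((p - ℓ).totient : ℝ) := by exact_mod_cast Nat.totient_pos.2 (by omega)
  rw [← Nat.cast_lt (α := ℝ), ← Real.log_lt_log_iff totient_add_pos totient_sub_pos,
    log_totient (by omega : p + ℓ ≠ 0) P, log_totient (by omega : p - ℓ ≠ 0) P,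
    truncatedDiff_eq hp.le, ← sub_pos]
  ring_nf

lemma tendsto_log_sub_sub_log_add (ℓ : ℕ) :
    Tendsto (fun n : ℕ ↦ Real.log (n - ℓ : ℕ) - Real.log (n + ℓ : ℕ)) atTop (𝓝 0) := by
  have lim := (Real.tendsto_log_comp_add_sub_log (2 * ℓ)).comp <| tendsto_natCast_atTop_atTop.comp
    (tendsto_sub_atTop_nat ℓ)
  rw [← neg_zero]
  refine lim.neg.congr' ?_
  filter_upwards [eventually_ge_atTop ℓ] with n hn
  have shift : ((n - ℓ : ℕ) : ℝ) + 2 * ℓ = (n + ℓ : ℕ) := by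
    norm_cast
    omega
  rw [Function.comp_apply, Function.comp_apply, shift, neg_sub]

lemma rare_of_not_iff_truncatedDiff_pos (ℓ p : ℕ) (P : Finset Nat.Primes) (ε : ℝ)
    (h : ¬ ((ℓ < p ∧ (p + ℓ).totient < (p - ℓ).totient) ↔ 0 < truncatedDiff ℓ P p)) :
    (p ≤ ℓ ∨ ε / 2 ≤ |Real.log (p - ℓ : ℕ) - Real.log (p + ℓ : ℕ)|) ∨
      |truncatedDiff ℓ P p| ≤ ε ∨
      ε / 2 ≤ tailWeight P (p + (ℓ : ℤ)).natAbs ∨ ε / 2 ≤ tailWeight P (p + (-ℓ : ℤ)).natAbs := by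
  by_contra! ⟨⟨hp, log_lt⟩, diff_gt, add_lt, sub_lt⟩
  rw [show (p + (ℓ : ℤ)).natAbs = p + ℓ by omega] at add_lt
  rw [show (p + (-ℓ : ℤ)).natAbs = p - ℓ by omega] at sub_lt
  refine h ?_
  rw [and_iff_right hp, totient_lt_totient_iff hp P]
  have add_nonneg := tailWeight_nonneg P (p + ℓ)
  have sub_nonneg := tailWeight_nonneg P (p - ℓ)
  obtain ⟨log_gt, log_lt⟩ := abs_lt.1 log_lt
  rcases lt_abs.1 diff_gt with diff_gt | diff_lt <;> constructor <;> intro <;> linarith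

lemma eventually_primeCount_not_iff_le {ℓ : ℕ} (hℓ : 0 < ℓ) {ε δ : ℝ} (hε : 0 < ε) (hδ : 0 < δ)
    (small : ∀ᶠ P in atTop, proportion (fun u ↦ |unitDiff ℓ P u| ≤ ε) ≤ δ / 8) :
    ∀ᶠ P in atTop, ∀ᶠ x : ℕ in atTop,
      primeCount (fun p ↦ ¬ ((ℓ < p ∧ (p + ℓ).totient < (p - ℓ).totient) ↔
        0 < truncatedDiff ℓ P p)) x ≤ δ * Nat.primeCounting x := by
  have log_rare : HasPrimeDensity
      (fun p ↦ p ≤ ℓ ∨ ε / 2 ≤ |Real.log (p - ℓ : ℕ) - Real.log (p + ℓ : ℕ)|) 0 := by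
    have lim := (tendsto_log_sub_sub_log_add ℓ).abs
    rw [abs_zero] at lim
    refine hasPrimeDensity_zero_of_eventually_not ?_
    filter_upwards [eventually_gt_atTop ℓ, lim.eventually_lt_const (half_pos hε)] with p hp hlt
    exact not_or.2 ⟨hp.not_ge, hlt.not_ge⟩
  have hℓ' : (ℓ : ℤ) ≠ 0 := by exact_mod_cast hℓ.ne'
  filter_upwards [small,
    eventually_primeCount_le_tailWeight_le hℓ' (half_pos hε) (by positivity : 0 < δ / 4),
    eventually_primeCount_le_tailWeight_le (neg_ne_zero.2 hℓ') (half_pos hε)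
      (by positivity : 0 < δ / 4)] with P diff_small add_small sub_small
  filter_upwards [log_rare.eventually_le (by positivity : 0 < δ / 4),
    (hasPrimeDensity_truncatedDiff ℓ P (|·| ≤ ε)).eventually_le
      (by linarith : _ < δ / 4), add_small, sub_small] with x log_le diff_le add_le sub_le
  have union_bound := (primeCount_mono (rare_of_not_iff_truncatedDiff_pos ℓ · P ε) x).trans <|
    (primeCount_or_le _ _ x).trans <| add_le_add_right ((primeCount_or_le _ _ x).trans <|
      add_le_add_right (primeCount_or_le _ _ x) _) _
  rw [← Nat.cast_le (α := ℝ), Nat.cast_add, Nat.cast_add, Nat.cast_add] at union_bound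
  linarith

theorem hasPrimeDensity_totient_lt {ℓ : ℕ} (hℓ : 0 < ℓ) :
    HasPrimeDensity (fun p ↦ ℓ < p ∧ (p + ℓ).totient < (p - ℓ).totient) (1 / 2) := by
  refine HasPrimeDensity.of_approx fun δ hδ ↦ ?_
  obtain ⟨ε, hε, small⟩ :=
    exists_eventually_proportion_abs_unitDiff_le hℓ (by positivity : 0 < δ / 8)
  obtain ⟨P, hP, exceptional⟩ :=
    (small.and (eventually_primeCount_not_iff_le hℓ hε hδ small)).exists
  exact ⟨_, _, hasPrimeDensity_truncatedDiff ℓ P (0 < ·),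
    (abs_proportion_unitDiff_pos_sub_half_le ℓ P hε.le).trans (by linarith), exceptional⟩

end Comparison

end ShiftedTotient

theorem phi_diff_positive_density (ℓ : ℕ) (hℓ : 0 < ℓ) :
    Tendsto (fun x : ℕ =>
      ({p : ℕ | p.Prime ∧ p ≤ x ∧ ℓ < p ∧
          Nat.totient (p + ℓ) < Nat.totient (p - ℓ)}.ncard : ℝ) /
        (Nat.primeCounting x : ℝ)) atTop (𝓝 (1 / 2)) := by
  classical
  refine (ShiftedTotient.hasPrimeDensity_totient_lt hℓ).congr fun x ↦ ?_
  rw [ShiftedTotient.primeCount_eq_card, ← Set.ncard_coe_finset]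
  congr 3
  ext p
  simp only [Finset.coe_filter, Nat.mem_primesLE, Set.mem_ofPred_eq]
  tauto
end

section
/- There exists an absolute constant C > 0 with the following property. Let y ≥ exp(48^6) be a real number and let D be a positive integer with 24 | D and D | L_y, such that ω(D) ∈ [1.5·log log y, 2.5·log log y] and D/φ(D) ≤ (log y)^{1/3}. Then the number of ordered pairs (m₁, m₂) of positive integers with m₁·m₂ = D, gcd(m₁, m₂) = 2, and |φ(m₁)/m₁ − φ(m₂)/m₂| < 4/(y·√(log y)) is at most C · 2^{ω(D)} / √(log log y). -/
/-- `Ly y` is the least common multiple of all positive integers `m ≤ y`. -/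
noncomputable def Ly (y : ℝ) : ℕ := (Finset.Icc 1 ⌊y⌋₊).lcm id

/-!
Among the factorizations `D = m₁ m₂` with `gcd(m₁, m₂) = g` whose totient ratios `φ(mᵢ)/mᵢ` nearly
agree, the prime supports of `m₁` form an antichain: enlarging the support of `m₁` shrinks that of
`m₂`, so `φ(m₁)/m₁ - φ(m₂)/m₂` drops by at least `φ(D)/(D q)` for some prime `q ∣ D`. As `q ≤ y`
because `D ∣ L_y`, this drop is at least twice the tolerance `4/(y √(log y))`. By Sperner's theorem
there are at most `choose ω(D) ⌊ω(D)/2⌋` supports. Each of them comes from at most `2 ^ ω(g)`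
factorizations, since only at the primes dividing `g` is there a choice left, namely whether the
excess of `D` over `g²` goes to `m₁` or to `m₂`.
-/

open Finset

section MiddleBinomial

lemma centralBinom_sq_mul_le (m : ℕ) : m.centralBinom ^ 2 * (2 * m + 1) ≤ 16 ^ m := by
  induction m with
  | zero => simp
  | succ m ih =>
    refine Nat.le_of_mul_le_mul_left ?_ (show 0 < (m + 1) ^ 2 by positivity)
    calc (m + 1) ^ 2 * ((m + 1).centralBinom ^ 2 * (2 * (m + 1) + 1))
        = ((m + 1) * (m + 1).centralBinom) ^ 2 * (2 * m + 3) := by ring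
      _ = m.centralBinom ^ 2 * (2 * m + 1) * (4 * ((2 * m + 1) * (2 * m + 3))) := by
        rw [Nat.succ_mul_centralBinom_succ]; ring
      _ ≤ 16 ^ m * (16 * (m + 1) ^ 2) := Nat.mul_le_mul ih (by nlinarith)
      _ = (m + 1) ^ 2 * 16 ^ (m + 1) := by ring

lemma centralBinom_succ_eq_two_mul_choose (m : ℕ) :
    (m + 1).centralBinom = 2 * (2 * m + 1).choose m := by
  rw [Nat.centralBinom_eq_two_mul_choose, mul_add_one, Nat.choose_succ_succ',
    Nat.choose_symm_half, ← two_mul]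

lemma choose_half_sq_mul_le (n : ℕ) : n.choose (n / 2) ^ 2 * n ≤ 4 ^ n := by
  obtain ⟨m, rfl | rfl⟩ := n.even_or_odd'
  · rw [Nat.mul_div_cancel_left m two_pos, ← Nat.centralBinom_eq_two_mul_choose, pow_mul]
    exact (Nat.mul_le_mul_left _ (Nat.le_succ _)).trans (centralBinom_sq_mul_le m)
  · have h := centralBinom_sq_mul_le (m + 1)
    rw [centralBinom_succ_eq_two_mul_choose] at h
    rw [show (2 * m + 1) / 2 = m by lia]
    have h4 : 4 ^ (2 * m + 1) * 4 = 16 ^ (m + 1) := by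
      rw [← pow_succ, show 2 * m + 1 + 1 = 2 * (m + 1) by ring, pow_mul]; norm_num
    nlinarith

lemma choose_half_mul_sqrt_le (n : ℕ) : (n.choose (n / 2) : ℝ) * √n ≤ 2 ^ n := by
  refine le_of_sq_le_sq ?_ (by positivity)
  rw [mul_pow, Real.sq_sqrt n.cast_nonneg, ← pow_mul, mul_comm n 2, pow_mul]
  norm_num1
  exact_mod_cast choose_half_sq_mul_le n

end MiddleBinomial

theorem card_le_choose_half_of_isAntichain {α : Type*} {𝒜 : Finset (Finset α)}
    {s : Finset α} (h𝒜 : IsAntichain (· ⊆ ·) (𝒜 : Set (Finset α))) (hs : ∀ A ∈ 𝒜, A ⊆ s) :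
    #𝒜 ≤ (#s).choose (#s / 2) := by
  classical
  have subset_of_subtype : ∀ A ∈ 𝒜, ∀ B ∈ 𝒜,
      A.subtype (· ∈ s) ⊆ B.subtype (· ∈ s) → A ⊆ B := fun A hA B _ h x hx =>
    mem_subtype.1 (h (mem_subtype.2 hx : (⟨x, hs A hA hx⟩ : {x // x ∈ s}) ∈ _))
  have inj : Set.InjOn (Finset.subtype (· ∈ s)) 𝒜 := fun A hA B hB h =>
    (subset_of_subtype A hA B hB h.subset).antisymm (subset_of_subtype B hB A hA h.symm.subset)
  have anti : IsAntichain (· ⊆ ·) (𝒜.image (Finset.subtype (· ∈ s)) : Set (Finset s)) := by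
    rw [coe_image]
    rintro _ ⟨A, hA, rfl⟩ _ ⟨B, hB, rfl⟩ hne hsub
    exact hne (congrArg _ (h𝒜.eq hA hB (subset_of_subtype A hA B hB hsub)))
  simpa [card_image_of_injOn inj] using anti.sperner

section TotientRatio

/-- The density `φ(n) / n` of the integers coprime to `n`; its value at `n = 0` is the junk `0`. -/
noncomputable def totientRatio (n : ℕ) : ℝ := n.totient / n

variable {a b q : ℕ}

lemma totientRatio_eq_prod (ha : a ≠ 0) :
    totientRatio a = ∏ p ∈ a.primeFactors, (1 - (p : ℝ)⁻¹) := by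
  have h : (a.totient : ℝ) = a * ∏ p ∈ a.primeFactors, (1 - (p : ℝ)⁻¹) := by
    simpa using congrArg (Rat.cast : ℚ → ℝ) a.totient_eq_mul_prod_factors
  rw [totientRatio, h, mul_div_cancel_left₀ _ (Nat.cast_ne_zero.2 ha)]

lemma one_sub_inv_natCast_nonneg (n : ℕ) : 0 ≤ 1 - (n : ℝ)⁻¹ :=
  sub_nonneg.2 n.cast_inv_le_one

lemma prod_one_sub_inv_natCast_anti : Antitone fun s : Finset ℕ => ∏ p ∈ s, (1 - (p : ℝ)⁻¹) :=
  prod_anti_set_of_le_one one_sub_inv_natCast_nonneg fun _ => sub_le_self _ (by positivity)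

lemma totientRatio_le_of_primeFactors_subset (ha : a ≠ 0) (hb : b ≠ 0)
    (h : a.primeFactors ⊆ b.primeFactors) : totientRatio b ≤ totientRatio a := by
  rw [totientRatio_eq_prod ha, totientRatio_eq_prod hb]
  exact prod_one_sub_inv_natCast_anti h

lemma totientRatio_le_one_sub_inv_mul (ha : a ≠ 0) (hb : b ≠ 0)
    (h : a.primeFactors ⊆ b.primeFactors) (hqb : q ∈ b.primeFactors) (hqa : q ∉ a.primeFactors) :
    totientRatio b ≤ (1 - (q : ℝ)⁻¹) * totientRatio a := by
  rw [totientRatio_eq_prod ha, totientRatio_eq_prod hb,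
    ← prod_insert (f := fun p : ℕ => 1 - (p : ℝ)⁻¹) hqa]
  exact prod_one_sub_inv_natCast_anti (insert_subset hqb h)

end TotientRatio

lemma dvd_of_mul_eq_mul_of_coprime {a b c d : ℕ} (h : a * b = c * d) (hcd : c.Coprime d)
    (ha : a ≠ 0) (hd : d ≠ 0) (hac : a.primeFactors ⊆ c.primeFactors) : a ∣ c := by
  have had : a.Coprime d :=
    (Nat.disjoint_primeFactors ha hd).1 (disjoint_of_subset_left hac hcd.disjoint_primeFactors)
  exact had.dvd_of_dvd_mul_right (h ▸ dvd_mul_right a b)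

/-- The ordered pairs `(m₁, m₂)` with `m₁ m₂ = D ≠ 0` and `gcd(m₁, m₂) = g`. -/
def gcdPairs (D g : ℕ) : Finset (ℕ × ℕ) := {m ∈ D.divisorsAntidiagonal | m.1.gcd m.2 = g}

namespace gcdPairs

variable {D g : ℕ} {m m' : ℕ × ℕ}

lemma mem_iff : m ∈ gcdPairs D g ↔ (m.1 * m.2 = D ∧ D ≠ 0) ∧ m.1.gcd m.2 = g := by
  rw [gcdPairs, mem_filter, Nat.mem_divisorsAntidiagonal]

lemma fst_ne_zero (hm : m ∈ gcdPairs D g) : m.1 ≠ 0 :=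
  Nat.ne_zero_of_mem_divisorsAntidiagonal (mem_filter.1 hm).1 |>.1

lemma snd_ne_zero (hm : m ∈ gcdPairs D g) : m.2 ≠ 0 :=
  Nat.ne_zero_of_mem_divisorsAntidiagonal (mem_filter.1 hm).1 |>.2

lemma gcd_ne_zero (hm : m ∈ gcdPairs D g) : g ≠ 0 :=
  (mem_iff.1 hm).2 ▸ Nat.gcd_ne_zero_left (fst_ne_zero hm)

lemma gcd_dvd_fst (hm : m ∈ gcdPairs D g) : g ∣ m.1 :=
  (mem_iff.1 hm).2 ▸ Nat.gcd_dvd_left m.1 m.2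

lemma gcd_dvd_snd (hm : m ∈ gcdPairs D g) : g ∣ m.2 :=
  (mem_iff.1 hm).2 ▸ Nat.gcd_dvd_right m.1 m.2

lemma primeFactors_union (hm : m ∈ gcdPairs D g) :
    m.1.primeFactors ∪ m.2.primeFactors = D.primeFactors := by
  rw [← (mem_iff.1 hm).1.1, Nat.primeFactors_mul (fst_ne_zero hm) (snd_ne_zero hm)]

lemma primeFactors_inter (hm : m ∈ gcdPairs D g) :
    m.1.primeFactors ∩ m.2.primeFactors = g.primeFactors := by
  rw [← (mem_iff.1 hm).2, Nat.primeFactors_gcd (fst_ne_zero hm) (snd_ne_zero hm)]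

lemma primeFactors_fst_subset (hm : m ∈ gcdPairs D g) : m.1.primeFactors ⊆ D.primeFactors :=
  primeFactors_union hm ▸ subset_union_left

lemma primeFactors_snd_subset_of_fst_subset (hm : m ∈ gcdPairs D g) (hm' : m' ∈ gcdPairs D g)
    (h : m.1.primeFactors ⊆ m'.1.primeFactors) : m'.2.primeFactors ⊆ m.2.primeFactors := by
  refine le_of_inf_le_sup_le (z := m'.1.primeFactors) ?_ ?_
  · calc m'.2.primeFactors ∩ m'.1.primeFactors
        = m.2.primeFactors ∩ m.1.primeFactors := by
          rw [inter_comm, primeFactors_inter hm', inter_comm, primeFactors_inter hm]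
      _ ⊆ m.2.primeFactors ∩ m'.1.primeFactors := inter_subset_inter_left h
  · calc m'.2.primeFactors ∪ m'.1.primeFactors
        = m.2.primeFactors ∪ m.1.primeFactors := by
          rw [union_comm, primeFactors_union hm', union_comm, primeFactors_union hm]
      _ ⊆ m.2.primeFactors ∪ m'.1.primeFactors := union_subset_union_right h

lemma coprime_div (hm : m ∈ gcdPairs D g) : (m.1 / g).Coprime (m.2 / g) := by
  obtain ⟨-, rfl⟩ := mem_iff.1 hm
  exact Nat.coprime_div_gcd_div_gcd (Nat.gcd_pos_of_pos_left _ (fst_ne_zero hm).bot_lt)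

lemma div_mul_div (hm : m ∈ gcdPairs D g) : m.1 / g * (m.2 / g) = D / (g * g) := by
  rw [Nat.div_mul_div_comm (gcd_dvd_fst hm) (gcd_dvd_snd hm), (mem_iff.1 hm).1.1]

lemma fst_dvd_of_primeFactors_div_subset (hm : m ∈ gcdPairs D g) (hm' : m' ∈ gcdPairs D g)
    (h : (m.1 / g).primeFactors ⊆ (m'.1 / g).primeFactors) : m.1 ∣ m'.1 := by
  have hdvd : m.1 / g ∣ m'.1 / g :=
    dvd_of_mul_eq_mul_of_coprime ((div_mul_div hm).trans (div_mul_div hm').symm) (coprime_div hm')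
      (Nat.div_ne_zero_iff_of_dvd (gcd_dvd_fst hm) |>.2 ⟨fst_ne_zero hm, gcd_ne_zero hm⟩)
      (Nat.div_ne_zero_iff_of_dvd (gcd_dvd_snd hm') |>.2 ⟨snd_ne_zero hm', gcd_ne_zero hm'⟩) h
  simpa only [Nat.div_mul_cancel, gcd_dvd_fst hm, gcd_dvd_fst hm'] using
    Nat.mul_dvd_mul_right hdvd g

lemma eq_of_primeFactors_div_eq (hm : m ∈ gcdPairs D g) (hm' : m' ∈ gcdPairs D g)
    (h : (m.1 / g).primeFactors = (m'.1 / g).primeFactors) : m = m' := by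
  have hfst : m.1 = m'.1 := Nat.dvd_antisymm
    (fst_dvd_of_primeFactors_div_subset hm hm' h.subset)
    (fst_dvd_of_primeFactors_div_subset hm' hm h.symm.subset)
  have hmul : m.1 * m.2 = m.1 * m'.2 := by
    rw [(mem_iff.1 hm).1.1, hfst, (mem_iff.1 hm').1.1]
  exact Prod.ext hfst (Nat.eq_of_mul_eq_mul_left (fst_ne_zero hm).bot_lt hmul)

lemma primeFactors_fst_eq_union (hm : m ∈ gcdPairs D g) :
    m.1.primeFactors = (m.1 / g).primeFactors ∪ g.primeFactors := by
  rw [← Nat.primeFactors_mul _ (gcd_ne_zero hm), Nat.div_mul_cancel (gcd_dvd_fst hm)]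
  exact Nat.div_ne_zero_iff_of_dvd (gcd_dvd_fst hm) |>.2 ⟨fst_ne_zero hm, gcd_ne_zero hm⟩

lemma injOn_primeFactors (D g : ℕ) :
    Set.InjOn (fun m => (m.1.primeFactors, (m.1 / g).primeFactors ∩ g.primeFactors))
      (gcdPairs D g : Set (ℕ × ℕ)) := by
  intro m hm m' hm' h
  obtain ⟨hfst, hinter⟩ := Prod.ext_iff.1 h
  refine eq_of_primeFactors_div_eq hm hm' (eq_of_inf_eq_sup_eq hinter ?_)
  exact (primeFactors_fst_eq_union hm).symm.trans (hfst.trans (primeFactors_fst_eq_union hm'))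

lemma card_le_of_subset {S : Finset (ℕ × ℕ)} (hS : S ⊆ gcdPairs D g) :
    #S ≤ 2 ^ #g.primeFactors * #(S.image fun m => m.1.primeFactors) := by
  rw [mul_comm, ← card_powerset, ← card_product]
  refine card_le_card_of_injOn _ (fun m hm => ?_) ((injOn_primeFactors D g).mono (mod_cast hS))
  exact mem_product.2 ⟨mem_image_of_mem _ hm, mem_powerset.2 inter_subset_right⟩

lemma totientRatio_div_le_sub (hm : m ∈ gcdPairs D g) (hm' : m' ∈ gcdPairs D g)
    (h : m.1.primeFactors ⊆ m'.1.primeFactors) {q : ℕ} (hq : q ∈ m'.1.primeFactors)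
    (hq' : q ∉ m.1.primeFactors) :
    totientRatio D / q ≤
      (totientRatio m.1 - totientRatio m.2) - (totientRatio m'.1 - totientRatio m'.2) := by
  have hD : totientRatio D ≤ totientRatio m.1 := totientRatio_le_of_primeFactors_subset
    (fst_ne_zero hm) (mem_iff.1 hm).1.2 (primeFactors_fst_subset hm)
  have hfst : totientRatio m'.1 ≤ (1 - (q : ℝ)⁻¹) * totientRatio m.1 :=
    totientRatio_le_one_sub_inv_mul (fst_ne_zero hm) (fst_ne_zero hm') h hq hq'
  have hsnd : totientRatio m.2 ≤ totientRatio m'.2 := totientRatio_le_of_primeFactors_subset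
    (snd_ne_zero hm') (snd_ne_zero hm) (primeFactors_snd_subset_of_fst_subset hm hm' h)
  calc totientRatio D / q ≤ totientRatio m.1 / q := by gcongr
    _ = totientRatio m.1 - (1 - (q : ℝ)⁻¹) * totientRatio m.1 := by ring
    _ ≤ _ := by linarith

end gcdPairs

/-- The pairs in `gcdPairs D g` whose two totient ratios differ by less than `ε`. -/
noncomputable def closeGcdPairs (D g : ℕ) (ε : ℝ) : Finset (ℕ × ℕ) :=
  {m ∈ gcdPairs D g | |totientRatio m.1 - totientRatio m.2| < ε}

namespace closeGcdPairs

variable {D g : ℕ} {ε : ℝ}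

lemma isAntichain_image_primeFactors (hε : ∀ q ∈ D.primeFactors, 2 * ε ≤ totientRatio D / q) :
    IsAntichain (· ⊆ ·)
      ((closeGcdPairs D g ε).image (fun m => m.1.primeFactors) : Set (Finset ℕ)) := by
  rw [coe_image]
  rintro _ ⟨m, hm, rfl⟩ _ ⟨m', hm', rfl⟩ hne hsub
  obtain ⟨hm, hlt⟩ := mem_filter.1 hm
  obtain ⟨hm', hlt'⟩ := mem_filter.1 hm'
  obtain ⟨q, hq, hq'⟩ := exists_of_ssubset (hsub.ssubset_of_ne hne)
  have hgap := gcdPairs.totientRatio_div_le_sub hm hm' hsub hq hq'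
  have hεq := hε q (gcdPairs.primeFactors_fst_subset hm' hq)
  linarith [(abs_lt.1 hlt).2, (abs_lt.1 hlt').1]

theorem card_le (hε : ∀ q ∈ D.primeFactors, 2 * ε ≤ totientRatio D / q) :
    #(closeGcdPairs D g ε) ≤
      2 ^ #g.primeFactors * (#D.primeFactors).choose (#D.primeFactors / 2) := by
  refine (gcdPairs.card_le_of_subset (filter_subset _ _)).trans (Nat.mul_le_mul_left _ ?_)
  refine card_le_choose_half_of_isAntichain (isAntichain_image_primeFactors hε) ?_
  exact forall_mem_image.2 fun m hm => gcdPairs.primeFactors_fst_subset (mem_filter.1 hm).1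

lemma coe_eq (D g : ℕ) (ε : ℝ) :
    (closeGcdPairs D g ε : Set (ℕ × ℕ)) =
      {mm : ℕ × ℕ | 0 < mm.1 ∧ 0 < mm.2 ∧ mm.1 * mm.2 = D ∧ Nat.gcd mm.1 mm.2 = g ∧
        |(Nat.totient mm.1 : ℝ) / (mm.1 : ℝ) - (Nat.totient mm.2 : ℝ) / (mm.2 : ℝ)| < ε} := by
  ext m
  rw [mem_coe, closeGcdPairs, mem_filter, gcdPairs.mem_iff, Set.mem_ofPred_eq]
  constructor
  · rintro ⟨⟨⟨rfl, hD⟩, hg⟩, hlt⟩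
    exact ⟨(left_ne_zero_of_mul hD).bot_lt, (right_ne_zero_of_mul hD).bot_lt, rfl, hg, hlt⟩
  · rintro ⟨h₁, h₂, rfl, hg, hlt⟩
    exact ⟨⟨⟨rfl, (Nat.mul_pos h₁ h₂).ne'⟩, hg⟩, hlt⟩

end closeGcdPairs

lemma le_of_prime_dvd_Ly {y : ℝ} {q : ℕ} (hq : q.Prime) (h : q ∣ Ly y) : (q : ℝ) ≤ y := by
  have hfac : Ly y ∣ (⌊y⌋₊).factorial := Finset.lcm_dvd fun m hm =>
    Nat.dvd_factorial (mem_Icc.1 hm).1 (mem_Icc.1 hm).2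
  exact (Nat.le_floor_iff' hq.ne_zero).1 (hq.dvd_factorial.1 (h.trans hfac))

lemma eight_div_sqrt_le_inv_rpow {x : ℝ} (hx : 8 ^ 6 ≤ x) : 8 / √x ≤ (x ^ ((1 : ℝ) / 3))⁻¹ := by
  have hx0 : 0 < x := lt_of_lt_of_le (by norm_num) hx
  have h8 : 8 ≤ x ^ ((1 : ℝ) / 6) := by
    rw [one_div, Real.le_rpow_inv_iff_of_pos (by norm_num) hx0.le (by norm_num)]
    exact_mod_cast hx
  have hsqrt : √x = x ^ ((1 : ℝ) / 6) * x ^ ((1 : ℝ) / 3) := by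
    rw [Real.sqrt_eq_rpow, ← Real.rpow_add hx0]
    norm_num
  calc 8 / √x = 8 / x ^ ((1 : ℝ) / 6) * (x ^ ((1 : ℝ) / 3))⁻¹ := by
        rw [hsqrt, ← div_div, div_eq_mul_inv]
    _ ≤ 1 * (x ^ ((1 : ℝ) / 3))⁻¹ := by gcongr; exact div_le_one_of_le₀ h8 (by positivity)
    _ = (x ^ ((1 : ℝ) / 3))⁻¹ := one_mul _

lemma eight_pow_le_log {y : ℝ} (hy : Real.exp (8 ^ 6) ≤ y) : 8 ^ 6 ≤ Real.log y :=
  (Real.le_log_iff_exp_le ((Real.exp_pos _).trans_le hy)).2 hy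

lemma two_mul_four_div_le_totientRatio_div {y : ℝ} (hy : Real.exp (8 ^ 6) ≤ y) {D q : ℕ}
    (hD : D ≠ 0) (hφ : (D : ℝ) / D.totient ≤ Real.log y ^ ((1 : ℝ) / 3)) (hq : 0 < q)
    (hqy : q ≤ y) : 2 * (4 / (y * √(Real.log y))) ≤ totientRatio D / q := by
  have hratio : (Real.log y ^ ((1 : ℝ) / 3))⁻¹ ≤ totientRatio D := by
    rw [totientRatio, ← inv_div (D : ℝ)]
    have := Nat.totient_pos.2 hD.bot_lt
    exact inv_anti₀ (by positivity) hφ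
  calc 2 * (4 / (y * √(Real.log y))) = 8 / √(Real.log y) / y := by ring
    _ ≤ totientRatio D / y := by
      gcongr
      · exact (Real.exp_pos _).le.trans hy
      · exact (eight_div_sqrt_le_inv_rpow (eight_pow_le_log hy)).trans hratio
    _ ≤ totientRatio D / q := by gcongr; exact div_nonneg (by positivity) (by positivity)

lemma log_log_pos {y : ℝ} (hy : Real.exp (8 ^ 6) ≤ y) : 0 < Real.log (Real.log y) :=
  Real.log_pos (lt_of_lt_of_le (by norm_num) (eight_pow_le_log hy))

theorem count_weird_pairs_general (g : ℕ) {y : ℝ} (hy : Real.exp (8 ^ 6) ≤ y) {D : ℕ}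
    (hD : D ∣ Ly y) (hω : Real.log (Real.log y) ≤ #D.primeFactors)
    (hφ : (D : ℝ) / D.totient ≤ Real.log y ^ ((1 : ℝ) / 3)) :
    ({mm : ℕ × ℕ | 0 < mm.1 ∧ 0 < mm.2 ∧ mm.1 * mm.2 = D ∧ Nat.gcd mm.1 mm.2 = g ∧
        |(Nat.totient mm.1 : ℝ) / (mm.1 : ℝ) - (Nat.totient mm.2 : ℝ) / (mm.2 : ℝ)| <
          4 / (y * √(Real.log y))}.ncard : ℝ) ≤
      2 ^ #g.primeFactors * 2 ^ #D.primeFactors / √(Real.log (Real.log y)) := by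
  have hε : ∀ q ∈ D.primeFactors, 2 * (4 / (y * √(Real.log y))) ≤ totientRatio D / q := by
    intro q hq
    obtain ⟨hqp, hqD, hD0⟩ := Nat.mem_primeFactors.1 hq
    exact two_mul_four_div_le_totientRatio_div hy hD0 hφ hqp.pos
      (le_of_prime_dvd_Ly hqp (hqD.trans hD))
  rw [← closeGcdPairs.coe_eq, Set.ncard_coe_finset, le_div_iff₀ (Real.sqrt_pos.2 (log_log_pos hy))]
  calc (#(closeGcdPairs D g (4 / (y * √(Real.log y)))) : ℝ) * √(Real.log (Real.log y))
      ≤ 2 ^ #g.primeFactors * (#D.primeFactors).choose (#D.primeFactors / 2) *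
          √(#D.primeFactors : ℝ) := by
        gcongr
        exact_mod_cast closeGcdPairs.card_le hε
    _ ≤ 2 ^ #g.primeFactors * 2 ^ #D.primeFactors := by
        rw [mul_assoc]
        gcongr
        exact choose_half_mul_sqrt_le _

theorem count_weird_pairs :
    ∃ C : ℝ, 0 < C ∧ ∀ y : ℝ, Real.exp ((48 : ℝ) ^ 6) ≤ y →
      ∀ D : ℕ, 0 < D → 24 ∣ D → D ∣ Ly y →
        (D.primeFactors.card : ℝ) ∈
          Set.Icc (1.5 * Real.log (Real.log y)) (2.5 * Real.log (Real.log y)) →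
        (D : ℝ) / (Nat.totient D : ℝ) ≤ (Real.log y) ^ ((1 : ℝ) / 3) →
        ({mm : ℕ × ℕ | 0 < mm.1 ∧ 0 < mm.2 ∧ mm.1 * mm.2 = D ∧
            Nat.gcd mm.1 mm.2 = 2 ∧
            |(Nat.totient mm.1 : ℝ) / (mm.1 : ℝ) - (Nat.totient mm.2 : ℝ) / (mm.2 : ℝ)| <
              4 / (y * Real.sqrt (Real.log y))}.ncard : ℝ) ≤
          C * 2 ^ D.primeFactors.card / Real.sqrt (Real.log (Real.log y)) := by
  refine ⟨2, two_pos, fun y hy D _ _ hD hω hφ => ?_⟩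
  have hy8 : Real.exp (8 ^ 6) ≤ y := (Real.exp_le_exp.2 (by norm_num)).trans hy
  have hω' : Real.log (Real.log y) ≤ #D.primeFactors := by linarith [hω.1, log_log_pos hy8]
  simpa [Nat.prime_two.primeFactors] using count_weird_pairs_general 2 hy8 hD hω' hφ
end
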